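/- Let n, l ∈ ω and let T ⊆ 2^ω be a perfect subset. Then for every Baire measurable coloring c : [T]^n → l there exists a perfect subset P ⊆ T such that the restriction of c to [P]^n_⪯ is constant for every total order ⪯ on {1,...,n-1}. -/

import Mathlib

/-! The proof reduces the coloring to one that is decided by initial segments, canonizes the latter
by an idempotent ultrafilter, and then passes to a skew subset.

*Reduction.* Up to a meager set, each color class is open. A fusion inside `T` meeting countably
many dense open subsets of `[T]^n` and deciding the open sets gives an embedding `Φ : 2^ω → T`
for which the color of `Φ ∘ Y` depends only on initial segments of `Y` that separate its entries
(`exists_local`). The fusion respects the lexicographic order and the comparison of splitting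
levels (`LexMono`, `GapMono`).

*Canonization.* A second embedding `Ψ` is built level by level: at level `N` one word `w` is chosen
whose letters are either a variable or functions of the node, and `w` is appended at every node of
that level, once with the variable replaced by `0` and once by `1`. The words are generic for an
ultrafilter `v` on the semigroup of such words (`exists_ultrafilter`) with these properties:
the value of the variable does not matter when words are read along tuples in which equal nodes
receive equal bits (this is where the Hales–Jewett theorem enters); only the order pattern of the
nodes matters (obtained by averaging over an iterated power of a nonprincipal ultrafilter on `ℕ`);
and prepending a word with the variable replaced by `0` changes nothing (obtained from an
idempotent). Hence a level at which no members of the tuple split does not change the expected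
color, and a level with a splitting changes it in a way that depends only on the order pattern of
the nodes and the bits taken. Consequently the color of `Φ ∘ Ψ ∘ Y` depends only on the list of
these data over the splitting levels (`splitType`).

*Skewness.* After composing with `skewMap`, two branches with bit `1` at a common level agree up
to there. For increasing tuples of such branches the bits at a splitting level are determined by
which pairs split there, so the split type is a function of the order of the splitting levels
(`splitType_eq`, `exists_canonical`). The gaps of such a tuple have distinct lengths, and
the splitting level of two members is the least length of the gaps between them; so this order is
determined by `⪯` (`splitLevel_lt_splitLevel_iff`), and `P` is the range of `Φ ∘ Ψ ∘ skewMap`.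
-/

open Set

/-- The Cantor space `2^ω`. -/
abbrev Cantor : Type := ℕ → Bool

/-- The first coordinate where `x` and `y` differ (`0` if `x = y`). -/
noncomputable def splitLevel (x y : Cantor) : ℕ :=
  letI := Classical.dec (x = y)
  if h : x = y then 0 else Nat.find (Function.ne_iff.mp h)

/-- The metric `d(x,y) = 1/(k+1)`, `k = min{m : x m ≠ y m}`. -/
noncomputable def cdist (x y : Cantor) : ℝ := 1 / (splitLevel x y + 1)

/-- The lexicographic order on `2^ω` induced by `0 < 1`. -/
def clex (x y : Cantor) : Prop := x ≠ y ∧ x (splitLevel x y) = false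

/-- The initial segment `x ↾ k` as an element of `2^{<ω}`. -/
def restr (x : Cantor) (k : ℕ) : List Bool := (List.range k).map x

/-- The longest common initial segment `x ∩ y`. -/
noncomputable def meet (x y : Cantor) : List Bool := restr x (splitLevel x y)

/-- A perfect subset of `2^ω`: nonempty, closed, with no isolated points. -/
def PerfectSet (P : Set Cantor) : Prop := Perfect P ∧ P.Nonempty

/-- A skew subset of `2^ω`. -/
def Skew (P : Set Cantor) : Prop :=
  ∀ x₀ ∈ P, ∀ x₁ ∈ P, ∀ y₀ ∈ P, ∀ y₁ ∈ P, x₀ ≠ x₁ → y₀ ≠ y₁ →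
    cdist x₀ x₁ = cdist y₀ y₁ → meet x₀ x₁ = meet y₀ y₁

/-- Index `i - 1` of the `i`-th gap (for `i ∈ {1,…,n-1}`, reindexed by `Fin (n-1)`). -/
def gapIdx {n : ℕ} (i : Fin (n - 1)) : Fin n := ⟨i.1, by have := i.2; omega⟩

/-- Index `i` of the `i`-th gap. -/
def gapIdx' {n : ℕ} (i : Fin (n - 1)) : Fin n := ⟨i.1 + 1, by have := i.2; omega⟩

/-- `|x_{i-1} ∩ x_i|` for the `i`-th gap of the tuple `X`. -/
noncomputable def gapLen {n : ℕ} (X : Fin n → Cantor) (i : Fin (n - 1)) : ℕ :=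
  splitLevel (X (gapIdx i)) (X (gapIdx' i))

/-- `x_{i-1} ∩ x_i` for the `i`-th gap of the tuple `X`. -/
noncomputable def gapMeet {n : ℕ} (X : Fin n → Cantor) (i : Fin (n - 1)) : List Bool :=
  meet (X (gapIdx i)) (X (gapIdx' i))

/-- `[T]^n` : lexicographically increasing `n`-tuples of elements of `T`. -/
def Tuples (n : ℕ) (T : Set Cantor) : Set (Fin n → Cantor) :=
  {X | (∀ i, X i ∈ T) ∧ ∀ i j : Fin n, i < j → clex (X i) (X j)}

/-- `[T]^n_⪯` : members of `[T]^n` whose gap distances realize the total order `⪯`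
(on `{1,…,n-1}`, reindexed by `Fin (n-1)`):
`d(x_{i-1},x_i) > d(x_{j-1},x_j)` iff `i ⪯ j`, for `i ≠ j`. -/
def OrdTuples (n : ℕ) (prec : Fin (n - 1) → Fin (n - 1) → Prop) (T : Set Cantor) :
    Set (Fin n → Cantor) :=
  {X | X ∈ Tuples n T ∧ ∀ i j : Fin (n - 1), i ≠ j →
      (cdist (X (gapIdx i)) (X (gapIdx' i)) > cdist (X (gapIdx j)) (X (gapIdx' j)) ↔ prec i j)}

/-- `D(X) = {x_{i-1} ∩ x_i : i ∈ {1,…,n-1}}`. -/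
def Dset (n : ℕ) (X : Fin n → Cantor) : Set (List Bool) :=
  {t | ∃ i : Fin (n - 1), t = gapMeet X i}

/-- `D̂(X) = D(X) ∪ {x_i ↾ |x_{j-1} ∩ x_j| : i ≠ j}`. -/
def Dhat (n : ℕ) (X : Fin n → Cantor) : Set (List Bool) :=
  Dset n X ∪ {t | ∃ (i : Fin n) (j : Fin (n - 1)), (i : ℕ) ≠ (j : ℕ) + 1 ∧
    t = restr (X i) (gapLen X j)}

/-- The abstract index set for the nodes of `D̂(X)`; it serves as the fixed
representative `C^n_⪯` of the isomorphism class of the trees `D̂(X)`,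
`X ∈ [2^ω]^n_⪯`, the isomorphism `g_X : D̂(X) → C^n_⪯` being the indexing. -/
abbrev CIdx (n : ℕ) : Type := Fin (n - 1) ⊕ Fin n × Fin (n - 1)

/-- The node of `D̂(X)` indexed by a given element of `C^n_⪯`: `inl j` indexes
`x_{j-1} ∩ x_j` and `inr (i, j)` indexes `x_i ↾ |x_{j-1} ∩ x_j|`. -/
noncomputable def nodeOf {n : ℕ} (X : Fin n → Cantor) : CIdx n → List Bool
  | .inl j => gapMeet X j
  | .inr (i, j) => restr (X i) (gapLen X j)

/-- `D̂(X):J = {x ↾ k : g_X(x ↾ k) ∈ J}` for `J ⊆ C^n_⪯`. -/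
noncomputable def DhatSel {n : ℕ} (X : Fin n → Cantor) (J : Set (CIdx n)) : Set (List Bool) :=
  nodeOf X '' J

/-- A map is Baire measurable if preimages of open sets have the Baire property. -/
def BaireMeasurableFun {α β : Type*} [TopologicalSpace α] [TopologicalSpace β]
    (f : α → β) : Prop :=
  ∀ U : Set β, IsOpen U → BaireMeasurableSet (f ⁻¹' U)

/-! ### Splitting levels and fusion schemes -/

/-- `x` and `y` have the same first `k` bits. -/
def Agree (k : ℕ) (x y : Cantor) : Prop := ∀ j < k, x j = y j

/-- `x` and `y` first differ at `k`, and `x` is the lexicographically smaller one. -/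
def SplitAt (k : ℕ) (x y : Cantor) : Prop := Agree k x y ∧ x k = false ∧ y k = true

lemma Agree.symm {k : ℕ} {x y : Cantor} (h : Agree k x y) : Agree k y x :=
  fun j hj => (h j hj).symm

lemma Agree.trans {k : ℕ} {x y z : Cantor} (h : Agree k x y) (h' : Agree k y z) :
    Agree k x z := fun j hj => (h j hj).trans (h' j hj)

lemma Agree.mono {k k' : ℕ} {x y : Cantor} (h : Agree k' x y) (hk : k ≤ k') : Agree k x y :=
  fun j hj => h j (lt_of_lt_of_le hj hk)

lemma agree_refl (k : ℕ) (x : Cantor) : Agree k x x := fun _ _ => rfl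

lemma SplitAt.congr {k m : ℕ} {x y x' y' : Cantor} (h : SplitAt k x y) (hk : k < m)
    (hx : Agree m x' x) (hy : Agree m y' y) : SplitAt k x' y' :=
  ⟨((hx.mono hk.le).trans h.1).trans (hy.mono hk.le).symm,
    (hx k hk).trans h.2.1, (hy k hk).trans h.2.2⟩

lemma splitLevel_spec {x y : Cantor} (h : x ≠ y) :
    Agree (splitLevel x y) x y ∧ x (splitLevel x y) ≠ y (splitLevel x y) := by
  classical
  unfold splitLevel
  rw [dif_neg h]
  refine ⟨fun j hj => ?_, Nat.find_spec (Function.ne_iff.mp h)⟩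
  by_contra hne
  exact Nat.find_min (Function.ne_iff.mp h) hj hne

lemma SplitAt.ne {k : ℕ} {x y : Cantor} (h : SplitAt k x y) : x ≠ y := by
  rintro rfl
  have := h.2.1.symm.trans h.2.2
  simp at this

lemma SplitAt.splitLevel_eq {k : ℕ} {x y : Cantor} (h : SplitAt k x y) : splitLevel x y = k := by
  obtain ⟨h1, h2⟩ := splitLevel_spec h.ne
  rcases lt_trichotomy (splitLevel x y) k with hlt | heq | hgt
  · exact absurd (h.1 _ hlt) h2
  · exact heq
  · have := h1 _ hgt
    rw [h.2.1, h.2.2] at this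
    simp at this

lemma SplitAt.unique {k k' : ℕ} {x y : Cantor} (h : SplitAt k x y) (h' : SplitAt k' x y) :
    k = k' := h.splitLevel_eq.symm.trans h'.splitLevel_eq

lemma clex.splitAt {x y : Cantor} (h : clex x y) : SplitAt (splitLevel x y) x y := by
  obtain ⟨h1, h2⟩ := splitLevel_spec h.1
  refine ⟨h1, h.2, ?_⟩
  rw [h.2] at h2
  simpa using h2.symm

lemma SplitAt.clex {k : ℕ} {x y : Cantor} (h : SplitAt k x y) : clex x y :=
  ⟨h.ne, by rw [h.splitLevel_eq]; exact h.2.1⟩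

lemma exists_splitAt_of_ne {x y : Cantor} (h : x ≠ y) :
    ∃ k, SplitAt k x y ∨ SplitAt k y x := by
  obtain ⟨h1, h2⟩ := splitLevel_spec h
  refine ⟨splitLevel x y, ?_⟩
  rcases hx : x (splitLevel x y) with _ | _ <;> rcases hy : y (splitLevel x y) with _ | _
  · simp [hx, hy] at h2
  · exact Or.inl ⟨h1, hx, hy⟩
  · exact Or.inr ⟨h1.symm, hy, hx⟩
  · simp [hx, hy] at h2

/-- The natural number whose binary expansion is `1` followed by the first `k` bits of `z`.
It encodes the node `z ↾ k` of the full binary tree; the children of the node `q` are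
`2 * q` and `2 * q + 1`. -/
def code (z : Cantor) : ℕ → ℕ
  | 0 => 1
  | k + 1 => 2 * code z k + (z k).toNat

lemma code_bounds (z : Cantor) (k : ℕ) : 2 ^ k ≤ code z k ∧ code z k < 2 ^ (k + 1) := by
  induction k with
  | zero => simp [code]
  | succ k ih =>
    have := Bool.toNat_lt (z k)
    simp only [code, pow_succ] at ih ⊢
    omega

lemma code_congr {k : ℕ} {x y : Cantor} (h : Agree k x y) : code x k = code y k := by
  induction k with
  | zero => rfl
  | succ k ih => simp only [code, ih (h.mono k.le_succ), h k k.lt_succ_self]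

lemma agree_of_code {k : ℕ} {x y : Cantor} (h : code x k = code y k) : Agree k x y := by
  induction k with
  | zero => intro j hj; omega
  | succ k ih =>
    have hx := Bool.toNat_lt (x k)
    have hy := Bool.toNat_lt (y k)
    simp only [code] at h
    intro j hj
    rcases Nat.lt_succ_iff_lt_or_eq.mp hj with hj | rfl
    · exact ih (by omega) j hj
    · have h2 : (x j).toNat = (y j).toNat := by omega
      revert h2
      cases x j <;> cases y j <;> simp

lemma code_div (z : Cantor) (k : ℕ) : code z (k + 1) / 2 = code z k := by
  have := Bool.toNat_lt (z k)
  simp only [code]; omega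

lemma SplitAt.code_lt {p k : ℕ} {x y : Cantor} (h : SplitAt p x y) (hk : p < k) :
    code x k < code y k := by
  induction k with
  | zero => omega
  | succ k ih =>
    have hx := Bool.toNat_lt (x k)
    rcases Nat.lt_succ_iff_lt_or_eq.mp hk with hk | rfl
    · have := ih hk
      simp only [code]; omega
    · simp only [code, code_congr h.1, h.2.1, h.2.2]; simp

lemma code_lt_iff {k : ℕ} {x y : Cantor} :
    code x k < code y k ↔ ∃ p < k, SplitAt p x y := by
  constructor
  · intro h
    have hne : x ≠ y := by rintro rfl; exact lt_irrefl _ h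
    obtain ⟨p, hp⟩ := exists_splitAt_of_ne hne
    have hpk : p < k := by
      by_contra hle
      have hxy : Agree k x y := by
        rcases hp with hp | hp
        · exact hp.1.mono (not_lt.mp hle)
        · exact (hp.1.mono (not_lt.mp hle)).symm
      exact h.ne (code_congr hxy)
    rcases hp with hp | hp
    · exact ⟨p, hpk, hp⟩
    · exact absurd (hp.code_lt hpk) h.not_gt
  · rintro ⟨p, hp, h⟩
    exact h.code_lt hp

/-- `F` preserves the strict lexicographic order. -/
def LexMono (F : Cantor → Cantor) : Prop :=
  ∀ p y z, SplitAt p y z → ∃ j, SplitAt j (F y) (F z)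

/-- `F` preserves the strict comparison of splitting levels. -/
def GapMono (F : Cantor → Cantor) : Prop :=
  ∀ p y z p' y' z', SplitAt p y z → SplitAt p' y' z' → p < p' →
    ∃ j j', j < j' ∧ SplitAt j (F y) (F z) ∧ SplitAt j' (F y') (F z')

/-- A fusion scheme: at stage `k` the node `q` of the full binary tree, `2 ^ k ≤ q < 2 ^ (k + 1)`,
is sent to the first `m k` bits of `x k q`. -/
structure IsScheme (m : ℕ → ℕ) (x : ℕ → ℕ → Cantor) : Prop where
  le : ∀ k, k ≤ m k
  mono : ∀ k, m k ≤ m (k + 1)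
  nest : ∀ k q, Agree (m k) (x (k + 1) q) (x k (q / 2))
  split : ∀ k q, 2 ^ k ≤ q → q < 2 ^ (k + 1) →
    ∃ j < m (k + 1), SplitAt j (x (k + 1) (2 * q)) (x (k + 1) (2 * q + 1))

/-- The map `2^ω → 2^ω` induced by a fusion scheme. -/
def schemeMap (x : ℕ → ℕ → Cantor) (y : Cantor) : Cantor :=
  fun j => x (j + 1) (code y (j + 1)) j

namespace IsScheme

variable {m : ℕ → ℕ} {x : ℕ → ℕ → Cantor}

lemma nest_le (h : IsScheme m x) (y : Cantor) {k k' : ℕ} (hk : k ≤ k') :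
    Agree (m k) (x k' (code y k')) (x k (code y k)) := by
  induction k', hk using Nat.le_induction with
  | base => exact agree_refl _ _
  | succ k' hk ih =>
    have := h.nest k' (code y (k' + 1))
    rw [code_div] at this
    exact (this.mono (monotone_nat_of_le_succ h.mono hk)).trans ih

lemma agree_map (h : IsScheme m x) (y : Cantor) (k : ℕ) :
    Agree (m k) (schemeMap x y) (x k (code y k)) := by
  intro j hj
  rcases le_total (j + 1) k with hk | hk
  · exact (h.nest_le y hk j (lt_of_lt_of_le j.lt_succ_self (h.le _))).symm
  · exact h.nest_le y hk j hj

lemma splitAt_map (h : IsScheme m x) {p : ℕ} {y z : Cantor} (hp : SplitAt p y z) :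
    ∃ j, m p ≤ j ∧ j < m (p + 1) ∧ SplitAt j (schemeMap x y) (schemeMap x z) := by
  obtain ⟨hb1, hb2⟩ := code_bounds y p
  obtain ⟨j, hj, hs⟩ := h.split p (code y p) hb1 hb2
  have hy : code y (p + 1) = 2 * code y p := by simp [code, hp.2.1]
  have hz : code z (p + 1) = 2 * code y p + 1 := by
    simp [code, hp.2.2, code_congr hp.1]
  have key : SplitAt j (schemeMap x y) (schemeMap x z) :=
    hs.congr hj (hy ▸ h.agree_map y (p + 1)) (hz ▸ h.agree_map z (p + 1))
  refine ⟨j, ?_, hj, key⟩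
  by_contra hlt
  have h1 := h.agree_map y p j (not_le.mp hlt)
  have h2 := h.agree_map z p j (not_le.mp hlt)
  rw [code_congr hp.1, ← h2] at h1
  rw [key.2.1, key.2.2] at h1
  simp at h1

lemma lexMono (h : IsScheme m x) : LexMono (schemeMap x) := by
  intro p y z hp
  obtain ⟨j, -, -, hj⟩ := h.splitAt_map hp
  exact ⟨j, hj⟩

lemma gapMono (h : IsScheme m x) : GapMono (schemeMap x) := by
  intro p y z p' y' z' hp hp' hlt
  obtain ⟨j, -, hj, hs⟩ := h.splitAt_map hp
  obtain ⟨j', hj', -, hs'⟩ := h.splitAt_map hp'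
  exact ⟨j, j', lt_of_lt_of_le hj ((monotone_nat_of_le_succ h.mono hlt).trans hj'), hs, hs'⟩

end IsScheme

lemma eventually_agree (k : ℕ) (y : Cantor) : ∀ᶠ z in nhds y, Agree k z y := by
  have : ∀ᶠ z : Cantor in nhds y, ∀ i ∈ Finset.range k, z i = y i := by
    rw [Filter.eventually_all_finset]
    intro i _
    have ho : IsOpen ((fun z : Cantor => z i) ⁻¹' {y i}) :=
      (isOpen_discrete ({y i} : Set Bool)).preimage (continuous_apply i)
    exact ho.mem_nhds rfl
  exact this.mono fun z hz i hi => hz i (Finset.mem_range.mpr hi)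

/-- A map each of whose output bits depends on finitely many input bits is continuous. -/
lemma continuous_of_local {F : Cantor → Cantor} (N : ℕ → ℕ)
    (h : ∀ j y z, Agree (N j) y z → F y j = F z j) : Continuous F := by
  refine continuous_pi fun j => ?_
  rw [continuous_iff_continuousAt]
  intro y
  exact (tendsto_const_nhds (x := F y j)).congr'
    ((eventually_agree (N j) y).mono fun z hz => (h j z y hz).symm)

lemma continuous_schemeMap (x : ℕ → ℕ → Cantor) : Continuous (schemeMap x) :=
  continuous_of_local (fun j => j + 1) fun j y z h => by
    simp only [schemeMap, code_congr h]

/-! ### Fusion inside `[T]^n` -/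

section Fusion

variable {n : ℕ} {T : Set Cantor}

/-- The basic clopen subset of `[T]^n` of tuples agreeing with `y` on the first `m` bits. -/
def box (T : Set Cantor) (m : ℕ) (y : Fin n → Cantor) : Set ↥(Tuples n T) :=
  {X | ∀ i, Agree m (X.1 i) (y i)}

lemma box_subset {m m' : ℕ} {y y' : Fin n → Cantor} (hm : m ≤ m')
    (h : ∀ i, Agree m (y' i) (y i)) : box T m' y' ⊆ box T m y :=
  fun _ hX i => ((hX i).mono hm).trans (h i)

lemma isOpen_box (m : ℕ) (y : Fin n → Cantor) : IsOpen (box T m y) := by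
  have h1 : ∀ z : Cantor, IsOpen {x : Cantor | Agree m x z} := fun z => by
    rw [isOpen_iff_mem_nhds]
    exact fun x hx => (eventually_agree m x).mono fun x' hx' => hx'.trans hx
  have h2 : box T m y =
      ⋂ i, (fun X : ↥(Tuples n T) => X.1 i) ⁻¹' {x : Cantor | Agree m x (y i)} := by
    ext X; simp [box]
  rw [h2]
  exact isOpen_iInter_of_finite fun i =>
    (h1 (y i)).preimage ((continuous_apply i).comp continuous_subtype_val)

lemma exists_box_subset {U : Set ↥(Tuples n T)} (hU : IsOpen U) {X : ↥(Tuples n T)}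
    (hX : X ∈ U) : ∃ m, box T m X.1 ⊆ U := by
  by_contra! hcon
  have hne : ∀ m, ∃ X' ∈ box T m X.1, X' ∉ U := fun m => Set.not_subset.mp (hcon m)
  choose X' h1 h2 using hne
  have hlim : Filter.Tendsto X' Filter.atTop (nhds X) := by
    rw [tendsto_subtype_rng, tendsto_pi_nhds]
    intro i
    rw [tendsto_pi_nhds]
    intro j
    refine (tendsto_const_nhds (x := X.1 i j)).congr' ?_
    filter_upwards [Filter.eventually_gt_atTop j] with m hm
    exact (h1 m i j hm).symm
  obtain ⟨m, hm⟩ := (hlim.eventually (hU.mem_nhds hX)).exists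
  exact h2 m hm

/-- The points `x q` of `T` at the nodes `q` of level `k` are lexicographically increasing, as
witnessed by their first `m` bits. -/
structure LevelSep (T : Set Cantor) (k : ℕ) (x : ℕ → Cantor) (m : ℕ) : Prop where
  mem : ∀ q, x q ∈ T
  sep : ∀ q q', 2 ^ k ≤ q → q < q' → q' < 2 ^ (k + 1) → ∃ p < m, SplitAt p (x q) (x q')

/-- Increasing `n`-tuples of nodes of level `k`. -/
def IncNodes (k : ℕ) (h : Fin n → ℕ) : Prop :=
  StrictMono h ∧ ∀ i, 2 ^ k ≤ h i ∧ h i < 2 ^ (k + 1)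

lemma LevelSep.refine {k m m' : ℕ} {x x' : ℕ → Cantor} (hx : LevelSep T k x m)
    (hm : m ≤ m') (hT : ∀ q, x' q ∈ T) (h : ∀ q, Agree m (x' q) (x q)) :
    LevelSep T k x' m' := by
  refine ⟨hT, fun q q' h1 h2 h3 => ?_⟩
  obtain ⟨p, hp, hs⟩ := hx.sep q q' h1 h2 h3
  exact ⟨p, hp.trans_le hm, hs.congr hp (h q) (h q')⟩

lemma LevelSep.tuple {k m : ℕ} {x : ℕ → Cantor} (hx : LevelSep T k x m) {h : Fin n → ℕ}
    (hh : IncNodes k h) : (fun i => x (h i)) ∈ Tuples n T := by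
  refine ⟨fun i => hx.mem _, fun i j hij => ?_⟩
  obtain ⟨p, -, hp⟩ := hx.sep _ _ (hh.2 i).1 (hh.1 hij) (hh.2 j).2
  exact hp.clex

/-- `G` holds for some box inside every given box. -/
def DenseBoxes (T : Set Cantor) (G : Set ↥(Tuples n T) → Prop) : Prop :=
  ∀ (X : ↥(Tuples n T)) (m : ℕ), ∃ (X' : ↥(Tuples n T)) (m' : ℕ),
    m ≤ m' ∧ (∀ i, Agree m (X'.1 i) (X.1 i)) ∧ G (box T m' X'.1)

/-- Finitely many tuples of nodes of one level can be given a dense hereditary property at once. -/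
lemma refine_level {G : Set ↥(Tuples n T) → Prop} (hG : ∀ B B', G B → B' ⊆ B → G B')
    (hd : DenseBoxes T G) (k : ℕ) (S : Finset (Fin n → ℕ)) (hS : ∀ h ∈ S, IncNodes k h)
    (x : ℕ → Cantor) (m : ℕ) (hx : LevelSep T k x m) :
    ∃ (x' : ℕ → Cantor) (m' : ℕ), LevelSep T k x' m' ∧ m ≤ m' ∧
      (∀ q, Agree m (x' q) (x q)) ∧ ∀ h ∈ S, G (box T m' fun i => x' (h i)) := by
  classical
  induction S using Finset.induction_on with
  | empty => exact ⟨x, m, hx, le_rfl, fun q => agree_refl _ _, by simp⟩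
  | insert h S _ ih =>
    obtain ⟨x1, m1, hx1, hm1, ha1, hg1⟩ := ih fun h' hh' => hS h' (Finset.mem_insert_of_mem hh')
    have hh := hS h (Finset.mem_insert_self _ _)
    obtain ⟨X', m', hm', hX', hGX⟩ := hd ⟨_, hx1.tuple hh⟩ m1
    have hin : ∀ i, Function.extend h X'.1 x1 (h i) = X'.1 i :=
      fun i => hh.1.injective.extend_apply _ _ _
    have key : ∀ q, Function.extend h X'.1 x1 q ∈ T ∧
        Agree m1 (Function.extend h X'.1 x1 q) (x1 q) := fun q => by
      by_cases hq : ∃ i, h i = q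
      · obtain ⟨i, rfl⟩ := hq
        rw [hin]
        exact ⟨X'.2.1 i, hX' i⟩
      · rw [Function.extend_apply' _ _ _ hq]
        exact ⟨hx1.mem q, agree_refl _ _⟩
    refine ⟨Function.extend h X'.1 x1, m', hx1.refine hm' (fun q => (key q).1)
      (fun q => (key q).2), hm1.trans hm', fun q => ((key q).2.mono hm1).trans (ha1 q), ?_⟩
    intro h' hh'
    rcases Finset.mem_insert.mp hh' with rfl | hmem
    · simpa only [hin] using hGX
    · exact hG _ _ (hg1 h' hmem) (box_subset hm' fun i => (key _).2)

lemma exists_split (hT : Perfect T) {x : Cantor} (hx : x ∈ T) (m : ℕ) :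
    ∃ y z j, y ∈ T ∧ z ∈ T ∧ Agree m y x ∧ Agree m z x ∧ SplitAt j y z := by
  have hacc := hT.acc x hx
  rw [accPt_iff_nhds] at hacc
  obtain ⟨y, ⟨hy1, hy2⟩, hne⟩ := hacc _ (eventually_agree m x)
  obtain ⟨j, hj | hj⟩ := exists_splitAt_of_ne hne
  · exact ⟨y, x, j, hy2, hx, hy1, agree_refl _ _, hj⟩
  · exact ⟨x, y, j, hx, hy2, agree_refl _ _, hy1, hj⟩

/-- Passage from level `k` to level `k + 1`: each point is replaced by two points close to it. -/
lemma split_level (hT : Perfect T) {k m : ℕ} {x : ℕ → Cantor} (hx : LevelSep T k x m) :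
    ∃ (x' : ℕ → Cantor) (m' : ℕ), LevelSep T (k + 1) x' m' ∧ m < m' ∧
      (∀ q, Agree m (x' q) (x (q / 2))) ∧ ∀ q, 2 ^ k ≤ q → q < 2 ^ (k + 1) →
        ∃ j < m', SplitAt j (x' (2 * q)) (x' (2 * q + 1)) := by
  choose y z j hy hz hyx hzx hj using fun q => exists_split hT (hx.mem q) m
  set x' : ℕ → Cantor := fun q => if q % 2 = 0 then y (q / 2) else z (q / 2) with hx'
  have he : ∀ q, x' (2 * q) = y q := fun q => by simp [hx']
  have ho : ∀ q, x' (2 * q + 1) = z q := fun q => by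
    have h1 : (2 * q + 1) % 2 = 1 := by omega
    have h2 : (2 * q + 1) / 2 = q := by omega
    simp [hx', h1, h2]
  have ha : ∀ q, Agree m (x' q) (x (q / 2)) := fun q => by
    by_cases hq : q % 2 = 0
    · simpa [hx', hq] using hyx (q / 2)
    · simpa [hx', hq] using hzx (q / 2)
  set m' := m + 1 + (Finset.range (2 ^ (k + 1))).sup (fun q => j q + 1) with hm'
  have hsp : ∀ q, q < 2 ^ (k + 1) → ∃ p < m', SplitAt p (x' (2 * q)) (x' (2 * q + 1)) := by
    intro q hq
    refine ⟨j q, ?_, by rw [he, ho]; exact hj q⟩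
    have := Finset.le_sup (f := fun q => j q + 1) (Finset.mem_range.mpr hq)
    omega
  refine ⟨x', m', ⟨fun q => ?_, fun q q' h1 h2 h3 => ?_⟩, by omega, ha, fun q _ hq => hsp q hq⟩
  · simp only [hx']
    split_ifs
    exacts [hy _, hz _]
  · rw [pow_succ] at h1 h3
    rcases (Nat.div_le_div_right (c := 2) h2.le).lt_or_eq with hlt | heq
    · obtain ⟨p, hp, hs⟩ := hx.sep (q / 2) (q' / 2) (by omega) hlt (by omega)
      exact ⟨p, by omega, hs.congr hp (ha q) (ha q')⟩
    · have e1 : q = 2 * (q / 2) := by omega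
      have e2 : q' = 2 * (q / 2) + 1 := by omega
      rw [e1, e2]
      rw [← e1]
      have := hsp (q / 2) (by omega)
      rwa [← e1] at this

/-- **Fusion lemma.** For a sequence of hereditary properties, each dense among the boxes of
`[T]^n`, there is a fusion scheme in `T` such that the box spanned by every increasing tuple of
nodes of level `k` has the `k`-th property. -/
lemma exists_scheme (hT : PerfectSet T) (G : ℕ → Set ↥(Tuples n T) → Prop)
    (hG : ∀ k B B', G k B → B' ⊆ B → G k B') (hd : ∀ k, DenseBoxes T (G k)) :
    ∃ m x, IsScheme m x ∧ (∀ k q, x k q ∈ T) ∧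
      ∀ k (h : Fin n → ℕ), IncNodes k h → G k (box T (m k) fun i => x k (h i)) := by
  classical
  let Good (k : ℕ) (s : (ℕ → Cantor) × ℕ) : Prop := LevelSep T k s.1 s.2 ∧ k ≤ s.2 ∧
    ∀ (h : Fin n → ℕ), IncNodes k h → G k (box T s.2 fun i => s.1 (h i))
  have full : ∀ k x m, LevelSep T k x m → ∃ (x' : ℕ → Cantor) (m' : ℕ), LevelSep T k x' m' ∧
      m ≤ m' ∧ (∀ q, Agree m (x' q) (x q)) ∧
      ∀ (h : Fin n → ℕ), IncNodes k h → G k (box T m' fun i => x' (h i)) := by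
    intro k x m hx
    obtain ⟨x', m', h1, h2, h3, h4⟩ := refine_level (hG k) (hd k) k
      ((Fintype.piFinset fun _ : Fin n => Finset.Ico (2 ^ k) (2 ^ (k + 1))).filter (IncNodes k))
      (fun h hh => (Finset.mem_filter.mp hh).2) x m hx
    refine ⟨x', m', h1, h2, h3, fun h hh => h4 h (Finset.mem_filter.mpr ⟨?_, hh⟩)⟩
    exact Fintype.mem_piFinset.mpr fun i => Finset.mem_Ico.mpr (hh.2 i)
  have base : ∃ s, Good 0 s := by
    obtain ⟨t, ht⟩ := hT.2
    obtain ⟨x', m', h1, -, -, h4⟩ := full 0 (fun _ => t) 0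
      ⟨fun _ => ht, fun q q' h1 h2 h3 => by simp at h1 h3; omega⟩
    exact ⟨(x', m'), h1, Nat.zero_le _, h4⟩
  have step : ∀ k (s : {s // Good k s}), ∃ s' : {s // Good (k + 1) s}, s.1.2 ≤ s'.1.2 ∧
      (∀ q, Agree s.1.2 (s'.1.1 q) (s.1.1 (q / 2))) ∧ ∀ q, 2 ^ k ≤ q → q < 2 ^ (k + 1) →
        ∃ j < s'.1.2, SplitAt j (s'.1.1 (2 * q)) (s'.1.1 (2 * q + 1)) := by
    rintro k ⟨⟨x, m⟩, hx, hk, -⟩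
    obtain ⟨x1, m1, a1, a2, a3, a4⟩ := split_level hT.1 hx
    obtain ⟨x2, m2, b1, b2, b3, b4⟩ := full (k + 1) x1 m1 a1
    have hk : k ≤ m := hk
    refine ⟨⟨(x2, m2), b1, by simp only; omega, b4⟩, by simp only; omega,
      fun q => ((b3 q).mono a2.le).trans (a3 q), fun q h1 h2 => ?_⟩
    obtain ⟨j, hj, hs⟩ := a4 q h1 h2
    exact ⟨j, lt_of_lt_of_le hj b2, hs.congr hj (b3 _) (b3 _)⟩
  choose f hf1 hf2 hf3 using step
  obtain ⟨s0, hs0⟩ := base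
  let s : ∀ k, {s // Good k s} := fun k => Nat.rec ⟨s0, hs0⟩ (fun k p => f k p) k
  exact ⟨fun k => (s k).1.2, fun k => (s k).1.1,
    ⟨fun k => (s k).2.2.1, fun k => hf1 k (s k), fun k => hf2 k (s k), fun k => hf3 k (s k)⟩,
    fun k q => (s k).2.1.mem q, fun k => (s k).2.2.2⟩

lemma dense_iInter_finset {α ι : Type*} [TopologicalSpace α] (s : Finset ι) (f : ι → Set α)
    (ho : ∀ i, IsOpen (f i)) (hd : ∀ i, Dense (f i)) : Dense (⋂ i ∈ s, f i) := by
  classical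
  induction s using Finset.induction_on with
  | empty => simp
  | insert a s _ ih =>
    rw [Finset.set_biInter_insert]
    exact (hd a).inter_of_isOpen_left ih (ho a)

lemma dense_union_interior_compl {α : Type*} [TopologicalSpace α] (U : Set α) :
    Dense (U ∪ interior Uᶜ) := by
  rw [interior_compl]
  intro x
  by_cases hx : x ∈ closure U
  · exact closure_mono subset_union_left hx
  · exact subset_closure (Or.inr hx)

/-- `c₀` is determined at an increasing tuple by any initial segments that already separate its
entries. -/
def LocalColoring {α : Type*} (c₀ : (Fin n → Cantor) → α) : Prop :=
  ∀ (k : ℕ) (Y Y' : Fin n → Cantor), (∀ i j, i < j → ∃ p < k, SplitAt p (Y i) (Y j)) →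
    (∀ i, Agree k (Y i) (Y' i)) → c₀ Y = c₀ Y'

/-- The reduction of a Baire measurable colouring to a continuous one: generic fusion in `T`
yields a copy of `2^ω` on which the colouring is decided by separating initial segments. -/
lemma exists_local (hT : PerfectSet T) {l : ℕ} (c : ↥(Tuples n T) → Fin l)
    (hc : BaireMeasurableFun c) :
    ∃ (Φ : Cantor → Cantor) (c₀ : (Fin n → Cantor) → Fin l), Continuous Φ ∧ LexMono Φ ∧
      GapMono Φ ∧ (∀ y, Φ y ∈ T) ∧
      (∀ (Y : Fin n → Cantor) (hY : (fun i => Φ (Y i)) ∈ Tuples n T), c ⟨_, hY⟩ = c₀ Y) ∧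
      LocalColoring c₀ := by
  classical
  have hU : ∀ a, ∃ U, IsOpen U ∧ c ⁻¹' {a} =ᶠ[residual _] U := fun a => by
    exact (hc {a} (isOpen_discrete _)).residualEq_isOpen
  choose U hUo hUr using hU
  have hres : {X | ∀ a, (c X = a ↔ X ∈ U a)} ∈ residual ↥(Tuples n T) := by
    have : ∀ᶠ X in residual ↥(Tuples n T), ∀ a, (c X = a ↔ X ∈ U a) := by
      rw [Filter.eventually_all]
      intro a
      exact (hUr a).mem_iff
    exact this
  rw [mem_residual_iff] at hres
  obtain ⟨S, hSo, hSd, hSc, hSs⟩ := hres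
  obtain ⟨f, hf⟩ := (hSc.insert univ).exists_eq_range ⟨univ, mem_insert _ _⟩
  have hfo : ∀ k, IsOpen (f k) := fun k => by
    have : f k ∈ insert univ S := hf ▸ mem_range_self k
    rcases this with h | h
    · rw [h]; exact isOpen_univ
    · exact hSo _ h
  have hfd : ∀ k, Dense (f k) := fun k => by
    have : f k ∈ insert univ S := hf ▸ mem_range_self k
    rcases this with h | h
    · rw [h]; exact dense_univ
    · exact hSd _ h
  obtain ⟨m, x, hs, hxT, hg⟩ := exists_scheme hT
    (fun k B => (∀ j ≤ k, B ⊆ f j) ∧ ∀ a, B ⊆ U a ∨ B ⊆ (U a)ᶜ)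
    (fun k B B' h hB => ⟨fun j hj => hB.trans (h.1 j hj), fun a => (h.2 a).imp hB.trans hB.trans⟩)
    (by
      intro k X m
      set V1 := ⋂ j ∈ Finset.range (k + 1), f j
      set W : Fin l → Set ↥(Tuples n T) := fun a => U a ∪ interior (U a)ᶜ
      have hWo : ∀ a, IsOpen (W a) := fun a => (hUo a).union isOpen_interior
      set V2 := ⋂ a ∈ Finset.univ, W a
      have o1 : IsOpen V1 := isOpen_biInter_finset fun j _ => hfo j
      have d1 : Dense V1 := dense_iInter_finset _ _ hfo hfd
      have d2 : Dense V2 :=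
        dense_iInter_finset _ _ hWo fun a => dense_union_interior_compl _
      have d := d1.inter_of_isOpen_left d2 o1
      obtain ⟨X', hX', ⟨h1, h2⟩⟩ :=
        d.inter_open_nonempty _ (isOpen_box m X.1) ⟨X, fun i => agree_refl _ _⟩
      obtain ⟨m1, hm1⟩ := exists_box_subset o1 h1
      have h3 : ∀ a, ∃ ma, box T ma X'.1 ⊆ U a ∨ box T ma X'.1 ⊆ (U a)ᶜ := fun a => by
        rcases (mem_iInter₂.mp h2 a (Finset.mem_univ a)) with h | h
        · obtain ⟨ma, h⟩ := exists_box_subset (hUo a) h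
          exact ⟨ma, Or.inl h⟩
        · obtain ⟨ma, h⟩ := exists_box_subset isOpen_interior h
          exact ⟨ma, Or.inr (h.trans interior_subset)⟩
      choose ma hma using h3
      refine ⟨X', m + m1 + Finset.univ.sup ma, by omega, hX', fun j hj => ?_, fun a => ?_⟩
      · refine (box_subset (by omega) fun i => agree_refl _ _).trans
          (hm1.trans (biInter_subset_of_mem ?_))
        simp only [Finset.coe_range, mem_Iio]
        exact Nat.lt_succ_of_le hj
      · have hle := Finset.le_sup (f := ma) (Finset.mem_univ a)
        have hb := box_subset (T := T) (y := X'.1) (y' := X'.1)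
          (show ma a ≤ m + m1 + Finset.univ.sup ma by omega) fun i => agree_refl _ _
        exact (hma a).imp hb.trans hb.trans)
  set Φ := schemeMap x
  have hΦT : ∀ y, Φ y ∈ T := fun y => by
    refine hT.1.closed.mem_of_tendsto (f := fun k => x k (code y k)) (b := Filter.atTop) ?_
      (Filter.Eventually.of_forall fun k => hxT _ _)
    rw [tendsto_pi_nhds]
    intro j
    refine (tendsto_const_nhds (x := Φ y j)).congr' ?_
    filter_upwards [Filter.eventually_gt_atTop j] with k hk
    exact hs.agree_map y k j (hk.trans_le (hs.le k))
  have hmem : ∀ Y : Fin n → Cantor, (∀ i j, i < j → ∃ p, SplitAt p (Y i) (Y j)) →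
      (fun i => Φ (Y i)) ∈ Tuples n T := fun Y hY =>
    ⟨fun i => hΦT _, fun i j hij => by
      obtain ⟨p, hp⟩ := hY i j hij
      obtain ⟨q, hq⟩ := hs.lexMono p _ _ hp
      exact hq.clex⟩
  have hne : Nonempty (Fin l) := by
    refine ⟨c ⟨_, hmem (fun i t => decide (n - i.1 ≤ t)) fun i j hij => ⟨n - j.1, ?_⟩⟩⟩
    have h1 : i.1 < j.1 := hij
    have h2 := j.2
    refine ⟨fun t ht => ?_, ?_, ?_⟩
    · have e1 : ¬ n - i.1 ≤ t := by omega
      have e2 : ¬ n - j.1 ≤ t := by omega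
      simp [e1, e2]
    · have e1 : ¬ n - i.1 ≤ n - j.1 := by omega
      simp [e1]
    · simp
  refine ⟨Φ, fun Y => if h : (fun i => Φ (Y i)) ∈ Tuples n T then c ⟨_, h⟩ else hne.some,
    continuous_schemeMap x, hs.lexMono, hs.gapMono, hΦT, fun Y hY => by simp only [dif_pos hY], ?_⟩
  intro k Y Y' hY hYY
  have hY' : ∀ i j, i < j → ∃ p < k, SplitAt p (Y' i) (Y' j) := fun i j hij => by
    obtain ⟨p, hp, h⟩ := hY i j hij
    exact ⟨p, hp, h.congr hp (hYY i).symm (hYY j).symm⟩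
  have h1 := hmem Y fun i j hij => (hY i j hij).imp fun _ h => h.2
  have h2 := hmem Y' fun i j hij => (hY' i j hij).imp fun _ h => h.2
  simp only [dif_pos h1, dif_pos h2]
  have hinc : ∀ (Z : Fin n → Cantor), (∀ i j, i < j → ∃ p < k, SplitAt p (Z i) (Z j)) →
      ∀ k', k ≤ k' → IncNodes k' fun i => code (Z i) k' := fun Z hZ k' hk =>
    ⟨fun i j hij => by
      obtain ⟨p, hp, h⟩ := hZ i j hij
      exact h.code_lt (hp.trans_le hk), fun i => code_bounds _ _⟩
  have hbox : ∀ (Z : Fin n → Cantor) (hZ : (fun i => Φ (Z i)) ∈ Tuples n T) k',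
      (⟨_, hZ⟩ : ↥(Tuples n T)) ∈ box T (m k') fun i => x k' (code (Z i) k') :=
    fun Z hZ k' i => hs.agree_map _ _
  have hgen : ∀ (Z : Fin n → Cantor) (hZ : (fun i => Φ (Z i)) ∈ Tuples n T),
      (∀ i j, i < j → ∃ p < k, SplitAt p (Z i) (Z j)) →
      ∀ a, (c ⟨_, hZ⟩ = a ↔ (⟨_, hZ⟩ : ↥(Tuples n T)) ∈ U a) := by
    intro Z hZ hZ'
    refine hSs (mem_sInter.mpr fun t ht => ?_)
    obtain ⟨j, rfl⟩ : t ∈ range f := hf ▸ mem_insert_of_mem _ ht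
    exact (hg (max j k) _ (hinc Z hZ' _ (le_max_right _ _))).1 j (le_max_left _ _) (hbox Z hZ _)
  have hin := (hgen Y h1 hY _).mp rfl
  have hb1 := hbox Y h1 k
  have hb2 := hbox Y' h2 k
  simp only [fun i => code_congr (hYY i)] at hb1
  refine ((hgen Y' h2 hY' _).mpr ?_).symm
  rcases (hg k _ (hinc Y' hY' k le_rfl)).2 (c ⟨_, h1⟩) with h | h
  · exact h hb2
  · exact absurd hin (h hb1)

end Fusion

/-! ### An idempotent ultrafilter of variable words -/

section Words

open Filter

/-- The space of infinite sequences of naturals with coordinate `i` prepended. -/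
def consSeq (i : ℕ) (f : ℕ → ℕ) : ℕ → ℕ := fun k => Nat.casesOn k i f

/-- The iterated Fubini power of a nonprincipal ultrafilter on `ℕ`: the ultrafilter of generic
sequences of length `N` (padded by zeros). -/
noncomputable def fubiniPow : ℕ → Ultrafilter (ℕ → ℕ)
  | 0 => pure 0
  | N + 1 => (hyperfilter ℕ).bind fun i => (fubiniPow N).map (consSeq i)

lemma eventually_fubiniPow_succ (N : ℕ) (S : (ℕ → ℕ) → Prop) :
    (∀ᶠ f in fubiniPow (N + 1), S f) ↔
      ∀ᶠ i in hyperfilter ℕ, ∀ᶠ f in fubiniPow N, S (consSeq i f) := Iff.rfl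

/-- `S f` depends only on the first `K` entries of `f`. -/
def DependsOnFirst (K : ℕ) (S : (ℕ → ℕ) → Prop) : Prop :=
  ∀ f f' : ℕ → ℕ, (∀ j < K, f j = f' j) → (S f ↔ S f')

lemma DependsOnFirst.cons {K : ℕ} {S : (ℕ → ℕ) → Prop} (hS : DependsOnFirst (K + 1) S)
    (i : ℕ) : DependsOnFirst K fun f => S (consSeq i f) := fun f f' h =>
  hS _ _ fun j hj => by
    cases j with
    | zero => rfl
    | succ j => exact h j (by omega)

/-- Subsequences of generic sequences are generic. -/
lemma eventually_fubiniPow_comp (N : ℕ) : ∀ (K : ℕ) (g : ℕ → ℕ) (S : (ℕ → ℕ) → Prop),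
    StrictMono g → (∀ j < K, g j < N) → DependsOnFirst K S →
      ((∀ᶠ f in fubiniPow N, S (f ∘ g)) ↔ ∀ᶠ f in fubiniPow K, S f) := by
  have triv : ∀ (N : ℕ) (g : ℕ → ℕ) (S : (ℕ → ℕ) → Prop), DependsOnFirst 0 S →
      ((∀ᶠ f in fubiniPow N, S (f ∘ g)) ↔ ∀ᶠ f in fubiniPow 0, S f) := by
    intro N g S hS
    have h : ∀ f, S f ↔ S 0 := fun f => hS _ _ fun j hj => absurd hj (Nat.not_lt_zero j)
    simp only [h]
    rw [eventually_const, eventually_const]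
  induction N with
  | zero =>
    intro K g S hg hN hS
    cases K with
    | zero => exact triv 0 g S hS
    | succ K => exact absurd (hN 0 (Nat.succ_pos _)) (Nat.not_lt_zero _)
  | succ N ih =>
    intro K g S hg hN hS
    cases K with
    | zero => exact triv _ g S hS
    | succ K =>
      have hpos : ∀ j, j < g (j + 1) := fun j => (Nat.lt_succ_self j).trans_le (hg.id_le _)
      rw [eventually_fubiniPow_succ]
      rcases Nat.eq_zero_or_pos (g 0) with h0 | h0
      · rw [eventually_fubiniPow_succ]
        refine eventually_congr (Eventually.of_forall fun i => ?_)
        rw [← ih K (fun j => g (j + 1) - 1) _ (fun a b hab => ?_) (fun j hj => ?_) (hS.cons i)]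
        · refine eventually_congr (Eventually.of_forall fun f => ?_)
          have : consSeq i f ∘ g = consSeq i (f ∘ fun j => g (j + 1) - 1) := by
            funext j
            cases j with
            | zero => simp [consSeq, h0]
            | succ j =>
              obtain ⟨t, ht⟩ := Nat.exists_eq_succ_of_ne_zero (Nat.ne_of_gt
                (lt_of_le_of_lt (Nat.zero_le _) (hpos j)))
              simp [consSeq, ht]
          rw [this]
        · have := hg (show a + 1 < b + 1 by omega)
          have := hpos a
          change g (a + 1) - 1 < g (b + 1) - 1
          omega
        · have := hN (j + 1) (by omega)
          have := hpos j
          omega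
      · have hp : ∀ j, 0 < g j := fun j => h0.trans_le (hg.monotone (Nat.zero_le j))
        have key : ∀ i, (∀ᶠ f in fubiniPow N, S (consSeq i f ∘ g)) ↔
            ∀ᶠ f in fubiniPow (K + 1), S f := fun i => by
          rw [← ih (K + 1) (fun j => g j - 1) S (fun a b hab => ?_) (fun j hj => ?_) hS]
          · refine eventually_congr (Eventually.of_forall fun f => ?_)
            have : consSeq i f ∘ g = f ∘ fun j => g j - 1 := by
              funext j
              obtain ⟨t, ht⟩ := Nat.exists_eq_succ_of_ne_zero (Nat.ne_of_gt (hp j))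
              simp [consSeq, ht]
            rw [this]
          · have := hg hab
            have := hp a
            change g a - 1 < g b - 1
            omega
          · have := hN j hj
            have := hp j
            omega
        simp only [key]
        rw [eventually_const]

/-- The ultrafilter of generic infinite sequences of naturals. -/
noncomputable def genericSeq : Ultrafilter (ℕ → ℕ) := (hyperfilter ℕ).bind fubiniPow

lemma eventually_genericSeq {K : ℕ} {S : (ℕ → ℕ) → Prop} (hS : DependsOnFirst K S) :
    (∀ᶠ f in genericSeq, S f) ↔ ∀ᶠ f in fubiniPow K, S f := by
  have h1 : (∀ᶠ f in genericSeq, S f) ↔ ∀ᶠ N in hyperfilter ℕ, ∀ᶠ f in fubiniPow N, S f := Iff.rfl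
  have h2 : ∀ᶠ N in hyperfilter ℕ, ((∀ᶠ f in fubiniPow N, S f) ↔ ∀ᶠ f in fubiniPow K, S f) := by
    refine Nat.hyperfilter_le_atTop ?_
    filter_upwards [eventually_ge_atTop K] with N hN
    exact eventually_fubiniPow_comp N K id S strictMono_id (fun j hj => hj.trans_le hN) hS
  rw [h1, eventually_congr h2, eventually_const]

lemma eventually_genericSeq_comp {K : ℕ} {S : (ℕ → ℕ) → Prop} (hS : DependsOnFirst K S)
    {g : ℕ → ℕ} (hg : StrictMono g) :
    (∀ᶠ f in genericSeq, S (f ∘ g)) ↔ ∀ᶠ f in genericSeq, S f := by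
  have hS' : DependsOnFirst (g K) fun f => S (f ∘ g) := fun f f' h =>
    hS _ _ fun j hj => h _ (hg hj)
  rw [eventually_genericSeq hS', eventually_genericSeq hS]
  exact eventually_fubiniPow_comp _ _ g S hg (fun j hj => hg hj) hS

/-- `h` and `h'` list their values in the same order, with the same coincidences. -/
def SamePattern {n : ℕ} (h h' : Fin n → ℕ) : Prop := ∀ i j, h i < h j ↔ h' i < h' j

/-- Tuples with the same pattern are carried to a common tuple by strictly increasing maps, as
`h + h'` is symmetric in `h` and `h'`. -/
lemma SamePattern.exists_strictMono {n : ℕ} {h h' : Fin n → ℕ} (hh : SamePattern h h') :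
    ∃ g : ℕ → ℕ, StrictMono g ∧ ∀ i, g (h i) = h i + h' i := by
  classical
  refine ⟨fun x => x + (Finset.univ.filter fun i => h i ≤ x).sup h', fun x y hxy => ?_, fun i => ?_⟩
  · refine add_lt_add_of_lt_of_le hxy (Finset.sup_mono fun i hi => ?_)
    simp only [Finset.mem_filter, Finset.mem_univ, true_and] at hi ⊢
    exact hi.trans hxy.le
  · refine congrArg (h i + ·) (le_antisymm (Finset.sup_le fun j hj => ?_) ?_)
    · simp only [Finset.mem_filter, Finset.mem_univ, true_and] at hj
      exact not_lt.mp fun hlt => absurd ((hh i j).mpr hlt) (not_lt.mpr hj)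
    · exact Finset.le_sup (f := h') (by simp)

lemma exists_dependsOnFirst {n : ℕ} (h : Fin n → ℕ) (E : Set (Fin n → ℕ)) :
    ∃ K, DependsOnFirst K fun f => f ∘ h ∈ E := by
  refine ⟨Finset.univ.sup h + 1, fun f f' hf => ?_⟩
  have : f ∘ h = f' ∘ h := funext fun i =>
    hf _ (Nat.lt_succ_of_le (Finset.le_sup (Finset.mem_univ i)))
  simp only [this]

lemma SamePattern.eventually_genericSeq {n : ℕ} {h h' : Fin n → ℕ} (hh : SamePattern h h')
    (E : Set (Fin n → ℕ)) :
    (∀ᶠ f in genericSeq, f ∘ h ∈ E) ↔ ∀ᶠ f in genericSeq, f ∘ h' ∈ E := by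
  have hh' : SamePattern h' h := fun i j => (hh i j).symm
  obtain ⟨g, hg, hgh⟩ := hh.exists_strictMono
  obtain ⟨g', hg', hgh'⟩ := hh'.exists_strictMono
  obtain ⟨K, hK⟩ := exists_dependsOnFirst h E
  obtain ⟨K', hK'⟩ := exists_dependsOnFirst h' E
  rw [← eventually_genericSeq_comp hK hg, ← eventually_genericSeq_comp hK' hg']
  have : g ∘ h = g' ∘ h' := funext fun i => by
    simp only [Function.comp, hgh, hgh', Nat.add_comm]
  simp only [Function.comp_assoc, this]

lemma eventually_genericSeq_ne {i j : ℕ} (hij : i ≠ j) : ∀ᶠ f : ℕ → ℕ in genericSeq, f i ≠ f j := by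
  wlog hlt : i < j generalizing i j
  · exact (this hij.symm (by omega)).mono fun f hf => hf.symm
  have hp : SamePattern ![0, 1] ![i, j] := by
    intro a b
    fin_cases a <;> fin_cases b <;> simp <;> omega
  have h1 := (hp.eventually_genericSeq {x | x 0 ≠ x 1}).mp
  refine h1 ?_
  have h2 : DependsOnFirst 2 fun f => f ∘ ![0, 1] ∈ {x : Fin 2 → ℕ | x 0 ≠ x 1} := fun f f' h => by
    simp [h 0, h 1]
  rw [eventually_genericSeq h2, eventually_fubiniPow_succ]
  refine Eventually.of_forall fun a => ?_
  rw [eventually_fubiniPow_succ]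
  have : ∀ᶠ b in hyperfilter ℕ, b ≠ a := by
    have hfin : ({a} : Set ℕ)ᶜ ∈ hyperfilter ℕ :=
      compl_mem_hyperfilter_of_finite (finite_singleton a)
    exact hfin
  refine this.mono fun b hb => Eventually.of_forall fun f => ?_
  simpa [consSeq] using hb.symm

/-- Finite words whose letters are either the variable `none` or assign a bit to every natural
number; `ℕ` is thought of as a set of nodes at which the word will be appended. -/
abbrev VarWord : Type := FreeMonoid (Option (ℕ → Bool))

variable {n : ℕ}

/-- The `n`-tuple of bit strings obtained by reading `w` at the nodes `h i`, with the bit `b i`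
in place of the variable. -/
def ev (h : Fin n → ℕ) (b : Fin n → Bool) (w : VarWord) : Fin n → List Bool :=
  fun i => (FreeMonoid.toList w).map fun o => o.elim (b i) fun a => a (h i)

/-- Coordinatewise concatenation of tuples of strings. -/
def cat (s t : Fin n → List Bool) : Fin n → List Bool := fun i => s i ++ t i

lemma cat_assoc (s t u : Fin n → List Bool) : cat (cat s t) u = cat s (cat t u) := by
  funext i; simp [cat]

lemma ev_mul (h : Fin n → ℕ) (b : Fin n → Bool) (w w' : VarWord) :
    ev h b (w * w') = cat (ev h b w) (ev h b w') := by
  funext i; simp [ev, cat, FreeMonoid.toList_mul]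

/-- `b` takes equal values wherever `h` does. -/
def Respects (b : Fin n → Bool) (h : Fin n → ℕ) : Prop := ∀ i j, h i = h j → b i = b j

/-- The image ultrafilters of `v` under the two evaluations coincide. -/
def SameEv (v : Ultrafilter VarWord) (h : Fin n → ℕ) (b : Fin n → Bool) (h' : Fin n → ℕ)
    (b' : Fin n → Bool) : Prop :=
  ∀ A : Set (Fin n → List Bool), (∀ᶠ w in v, ev h b w ∈ A) ↔ ∀ᶠ w in v, ev h' b' w ∈ A

/-- Almost all words contain the variable. -/
def HasVar (v : Ultrafilter VarWord) : Prop := ∀ᶠ w : VarWord in v, none ∈ FreeMonoid.toList w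

/-- The value of the variable is irrelevant to `v`, provided that equal nodes receive equal
bits. -/
def BitFree (n : ℕ) (v : Ultrafilter VarWord) : Prop :=
  ∀ (h : Fin n → ℕ) (b b' : Fin n → Bool), Respects b h → Respects b' h → SameEv v h b h b'

/-- Only the order pattern of the nodes is relevant to `v`. -/
def NodeFree (n : ℕ) (v : Ultrafilter VarWord) : Prop :=
  ∀ (h h' : Fin n → ℕ) (b : Fin n → Bool), SamePattern h h' → SameEv v h b h' b

/-- The finitary content of `BitFree`, an instance of the Hales–Jewett theorem. -/
lemma exists_word {n : ℕ} {ι : Type*} [Finite ι] (h : ι → Fin n → ℕ) (a a' : ι → ℕ → Bool)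
    (A : ι → Set (Fin n → List Bool)) : ∃ w : VarWord, none ∈ FreeMonoid.toList w ∧
      ∀ t, ev (h t) (a t ∘ h t) w ∈ A t ↔ ev (h t) (a' t ∘ h t) w ∈ A t := by
  classical
  cases nonempty_fintype ι
  set N := Finset.univ.sup (fun t => Finset.univ.sup (h t)) + 1 with hN
  have hlt : ∀ t i, h t i < N := fun t i => Nat.lt_succ_of_le
    ((Finset.le_sup (f := h t) (Finset.mem_univ i)).trans
      (Finset.le_sup (f := fun t => Finset.univ.sup (h t)) (Finset.mem_univ t)))
  let ext : (Fin N → Bool) → ℕ → Bool := fun g x => if hx : x < N then g ⟨x, hx⟩ else false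
  obtain ⟨κ, _, hκ⟩ := Combinatorics.Line.exists_mono_in_high_dimension (Fin N → Bool) (ι → Prop)
  obtain ⟨L, C, hC⟩ := hκ fun x t => (fun i => (Finset.univ.toList : List κ).map
    fun k => x k (⟨h t i, hlt t i⟩ : Fin N)) ∈ A t
  refine ⟨FreeMonoid.ofList ((Finset.univ.toList : List κ).map fun k => (L.idxFun k).map ext),
    ?_, fun t => ?_⟩
  · obtain ⟨k, hk⟩ := L.proper
    simp only [FreeMonoid.toList_ofList, List.mem_map, Finset.mem_toList, Finset.mem_univ, true_and]
    exact ⟨k, by simp [hk]⟩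
  · have key : ∀ b : ℕ → Bool, ev (h t) (b ∘ h t)
        (FreeMonoid.ofList ((Finset.univ.toList : List κ).map fun k => (L.idxFun k).map ext)) ∈ A t
        ↔ C t := fun b => by
      rw [← congrFun (hC fun x : Fin N => b x) t]
      refine iff_of_eq (congrArg (· ∈ A t) (funext fun i => ?_))
      simp only [ev, FreeMonoid.toList_ofList, List.map_map]
      refine List.map_congr_left fun k _ => ?_
      simp only [Function.comp, Combinatorics.Line.coe_apply]
      cases L.idxFun k with
      | none => simp
      | some g => simp [ext, hlt t i]
    rw [key, key]

lemma Respects.exists_comp {b : Fin n → Bool} {h : Fin n → ℕ} (hb : Respects b h) :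
    ∃ a : ℕ → Bool, b = a ∘ h := by
  classical
  refine ⟨fun x => if hx : ∃ i, h i = x then b hx.choose else false, funext fun i => ?_⟩
  have hx : ∃ j, h j = h i := ⟨i, rfl⟩
  simp only [Function.comp, dif_pos hx]
  exact hb _ _ hx.choose_spec.symm

/-- By Hales–Jewett, the conditions defining `BitFree` have the finite intersection property. -/
lemma exists_bitFree (n : ℕ) : ∃ v, HasVar v ∧ BitFree n v := by
  classical
  let B : (Fin n → ℕ) × (ℕ → Bool) × (ℕ → Bool) × Set (Fin n → List Bool) → Set VarWord :=
    fun t => {w | none ∈ FreeMonoid.toList w ∧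
      (ev t.1 (t.2.1 ∘ t.1) w ∈ t.2.2.2 ↔ ev t.1 (t.2.2.1 ∘ t.1) w ∈ t.2.2.2)}
  obtain ⟨v, hv⟩ := Ultrafilter.exists_ultrafilter_of_finite_inter_nonempty (range B) (by
    intro S hS
    have : ∀ s : S, ∃ t, B t = s.1 := fun s => hS s.2
    choose t ht using this
    obtain ⟨w, hw1, hw2⟩ := exists_word (fun s => (t s).1) (fun s => (t s).2.1)
      (fun s => (t s).2.2.1) (fun s => (t s).2.2.2)
    refine ⟨w, fun s hs => ?_⟩
    change w ∈ ((⟨s, hs⟩ : S) : Set VarWord)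
    rw [← ht ⟨s, hs⟩]
    exact ⟨hw1, hw2 ⟨s, hs⟩⟩)
  have hB : ∀ t, ∀ᶠ w in v, w ∈ B t := fun t => hv (mem_range_self t)
  refine ⟨v, (hB (0, fun _ => false, fun _ => false, ∅)).mono fun w hw => hw.1,
    fun h b b' hb hb' A => ?_⟩
  obtain ⟨a, rfl⟩ := hb.exists_comp
  obtain ⟨a', rfl⟩ := hb'.exists_comp
  exact eventually_congr ((hB (h, a, a', A)).mono fun w hw => hw.2)

/-- Precomposing all letters of a bit-free ultrafilter with a generic sequence of nodes makes it
node-free. -/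
lemma exists_nodeFree (n : ℕ) : ∃ v, HasVar v ∧ BitFree n v ∧ NodeFree n v := by
  obtain ⟨v, hv0, hv2⟩ := exists_bitFree n
  let π : (ℕ → ℕ) → VarWord → VarWord := fun f w =>
    FreeMonoid.ofList ((FreeMonoid.toList w).map fun o => o.map fun a => a ∘ f)
  have hπ : ∀ f w (h : Fin n → ℕ) b, ev h b (π f w) = ev (f ∘ h) b w := fun f w h b => by
    funext i
    simp only [ev, π, FreeMonoid.toList_ofList, List.map_map]
    refine List.map_congr_left fun o _ => ?_
    cases o <;> rfl
  set v1 : Ultrafilter VarWord := genericSeq.bind fun f => v.map (π f)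
  have hv1 : ∀ p : VarWord → Prop,
      (∀ᶠ w in v1, p w) ↔ ∀ᶠ f in genericSeq, ∀ᶠ w in v, p (π f w) := fun p => Iff.rfl
  refine ⟨v1, (hv1 _).mpr (Eventually.of_forall fun f => hv0.mono fun w hw => ?_),
    fun h b b' hb hb' A => ?_, fun h h' b hh A => ?_⟩
  · simp only [π, FreeMonoid.toList_ofList, List.mem_map]
    exact ⟨none, hw, rfl⟩
  · simp only [hv1, hπ]
    have hinj : ∀ᶠ f : ℕ → ℕ in genericSeq, ∀ i j, h i ≠ h j → f (h i) ≠ f (h j) := by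
      rw [eventually_all]
      intro i
      rw [eventually_all]
      intro j
      by_cases hij : h i = h j
      · exact Eventually.of_forall fun f hne => absurd hij hne
      · exact (eventually_genericSeq_ne hij).mono fun f hf _ => hf
    refine eventually_congr (hinj.mono fun f hf => hv2 _ _ _ (fun i j e => hb i j ?_)
      (fun i j e => hb' i j ?_) A)
    · by_contra hne; exact hf i j hne e
    · by_contra hne; exact hf i j hne e
  · simp only [hv1, hπ]
    exact hh.eventually_genericSeq {x | ∀ᶠ w in v, ev x b w ∈ A}

attribute [local instance] Ultrafilter.semigroup

lemma SameEv.mul {u v : Ultrafilter VarWord} {h h' : Fin n → ℕ} {b b' : Fin n → Bool}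
    (hu : SameEv u h b h' b') (hv : SameEv v h b h' b') : SameEv (u * v) h b h' b' := by
  intro A
  simp only [Ultrafilter.eventually_mul, ev_mul]
  refine (eventually_congr (Eventually.of_forall fun w => hv {t | cat (ev h b w) t ∈ A})).trans ?_
  exact hu {s | ∀ᶠ w' in v, cat s (ev h' b' w') ∈ A}

lemma isClosed_sameEv (h : Fin n → ℕ) (b : Fin n → Bool) (h' : Fin n → ℕ) (b' : Fin n → Bool) :
    IsClosed {v | SameEv v h b h' b'} := by
  have : {v | SameEv v h b h' b'} = ⋂ A : Set (Fin n → List Bool),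
      {v : Ultrafilter VarWord | ev h b ⁻¹' A ∈ v ↔ ev h' b' ⁻¹' A ∈ v} := by
    ext v
    simp only [SameEv, mem_ofPred_eq, mem_iInter]
    rfl
  rw [this]
  refine isClosed_iInter fun A => ?_
  have h1 : ∀ s : Set VarWord, IsClopen {v : Ultrafilter VarWord | s ∈ v} := fun s =>
    ⟨ultrafilter_isClosed_basic s, ultrafilter_isOpen_basic s⟩
  have h2 : {v : Ultrafilter VarWord | ev h b ⁻¹' A ∈ v ↔ ev h' b' ⁻¹' A ∈ v} =
      ({v | ev h b ⁻¹' A ∈ v} ∩ {v | ev h' b' ⁻¹' A ∈ v}) ∪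
        ({v | ev h b ⁻¹' A ∈ v}ᶜ ∩ {v | ev h' b' ⁻¹' A ∈ v}ᶜ) := by
    ext v
    simp only [mem_ofPred_eq, mem_union, mem_inter_iff, mem_compl_iff]
    tauto
  rw [h2]
  exact (((h1 _).inter (h1 _)).union ((h1 _).compl.inter (h1 _).compl)).1

/-- Prepending words read with variable zero does not change the behaviour of `v`. -/
def AbsorbsZero (n : ℕ) (v : Ultrafilter VarWord) : Prop :=
  ∀ (h : Fin n → ℕ) (b : Fin n → Bool) (A : Set (Fin n → List Bool)),
    (∀ᶠ u in v, ev h b u ∈ A) ↔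
      ∀ᶠ z in v, ∀ᶠ u in v, cat (ev h (fun _ => false) z) (ev h b u) ∈ A

/-- The ultrafilter from which the words of the construction are taken. With an idempotent `v` and
its image `v₀` under the substitution of `0` for the variable, `v₀ * v` is as required, because
`v₀ * (v₀ * v) = v₀ * v`. -/
lemma exists_ultrafilter (n : ℕ) :
    ∃ v, HasVar v ∧ BitFree n v ∧ NodeFree n v ∧ AbsorbsZero n v := by
  obtain ⟨v, ⟨hv0, hv2, hv1⟩, hvv⟩ := exists_idempotent_in_compact_subsemigroup
    (M := Ultrafilter VarWord) Ultrafilter.continuous_mul_left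
    {v | HasVar v ∧ BitFree n v ∧ NodeFree n v} (exists_nodeFree n)
    (by
      refine IsClosed.isCompact ?_
      refine (ultrafilter_isClosed_basic {w | none ∈ FreeMonoid.toList w}).inter
        (IsClosed.inter ?_ ?_)
      · have : {v | BitFree n v} = ⋂ (h : Fin n → ℕ) (b : Fin n → Bool) (b' : Fin n → Bool)
            (_ : Respects b h) (_ : Respects b' h), {v | SameEv v h b h b'} := by
          ext v; simp [BitFree]
        change IsClosed {v | BitFree n v}
        rw [this]
        exact isClosed_iInter fun _ => isClosed_iInter fun _ => isClosed_iInter fun _ =>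
          isClosed_iInter fun _ => isClosed_iInter fun _ => isClosed_sameEv _ _ _ _
      · have : {v | NodeFree n v} = ⋂ (h : Fin n → ℕ) (h' : Fin n → ℕ) (b : Fin n → Bool)
            (_ : SamePattern h h'), {v | SameEv v h b h' b} := by
          ext v; simp [NodeFree]
        change IsClosed {v | NodeFree n v}
        rw [this]
        exact isClosed_iInter fun _ => isClosed_iInter fun _ => isClosed_iInter fun _ =>
          isClosed_iInter fun _ => isClosed_sameEv _ _ _ _)
    (by
      rintro u ⟨-, hu2, hu1⟩ v ⟨hv0, hv2, hv1⟩
      refine ⟨?_, fun h b b' hb hb' => (hu2 h b b' hb hb').mul (hv2 h b b' hb hb'),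
        fun h h' b hh => (hu1 h h' b hh).mul (hv1 h h' b hh)⟩
      refine (Ultrafilter.eventually_mul u v _).mpr (Eventually.of_forall fun w => hv0.mono ?_)
      intro w' hw'
      simp [FreeMonoid.toList_mul, hw'])
  -- `θ` substitutes `0` for the variable; the outcome contains no variable any more.
  let θ : VarWord → VarWord := fun w => FreeMonoid.ofList ((FreeMonoid.toList w).map fun o =>
    some (o.getD fun _ => false))
  have hθ : ∀ w (h : Fin n → ℕ) b, ev h b (θ w) = ev h (fun _ => false) w := fun w h b => by
    funext i
    simp only [ev, θ, FreeMonoid.toList_ofList, List.map_map]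
    refine List.map_congr_left fun o _ => ?_
    cases o <;> rfl
  have hmul : ∀ p : VarWord → Prop,
      (∀ᶠ w in v.map θ * v, p w) ↔ ∀ᶠ x in v, ∀ᶠ y in v, p (θ x * y) := fun p =>
    Ultrafilter.eventually_mul (v.map θ) v p
  have hidem : ∀ p : VarWord → Prop, (∀ᶠ x in v, ∀ᶠ y in v, p (x * y)) ↔ ∀ᶠ w in v, p w :=
    fun p => by rw [← Ultrafilter.eventually_mul, hvv]
  have hsame : ∀ (h : Fin n → ℕ) (b b' : Fin n → Bool), SameEv (v.map θ) h b h b' := by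
    intro h b b' A
    change (∀ᶠ w in v, ev h b (θ w) ∈ A) ↔ ∀ᶠ w in v, ev h b' (θ w) ∈ A
    simp only [hθ]
  refine ⟨v.map θ * v, ?_, fun h b b' hb hb' => (hsame h b b').mul (hv2 h b b' hb hb'),
    fun h h' b hh => SameEv.mul ?_ (hv1 h h' b hh), fun h b A => ?_⟩
  · refine (hmul _).mpr (Eventually.of_forall fun w => hv0.mono fun w' hw' => ?_)
    simp [FreeMonoid.toList_mul, hw']
  · intro A
    change (∀ᶠ w in v, ev h b (θ w) ∈ A) ↔ ∀ᶠ w in v, ev h' b (θ w) ∈ A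
    simp only [hθ]
    exact hv1 h h' _ hh A
  · simp only [hmul, ev_mul, hθ, ← cat_assoc]
    simp only [← ev_mul]
    rw [hidem fun z => ∀ᶠ x in v, ∀ᶠ y in v,
      cat (ev h (fun _ => false) (z * x)) (ev h b y) ∈ A]
    exact (hidem fun z => ∀ᶠ y in v, cat (ev h (fun _ => false) z) (ev h b y) ∈ A).symm

end Words

/-! ### Canonization of continuous colourings -/

section Canonical

open Filter

variable {n : ℕ} {α : Type*}

/-- The order pattern of a tuple of nodes, as a relation. -/
def pat (h : Fin n → ℕ) : Fin n → Fin n → Prop := fun i j => h i < h j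

open Classical in
/-- A tuple of nodes with the order pattern `R` (the zero tuple if there is none). -/
noncomputable def patRep (R : Fin n → Fin n → Prop) : Fin n → ℕ :=
  if h : ∃ h, pat h = R then h.choose else 0

lemma samePattern_patRep (h : Fin n → ℕ) : SamePattern h (patRep (pat h)) := by
  have hex : ∃ h', pat h' = pat h := ⟨h, rfl⟩
  have hp : pat (patRep (pat h)) = pat h := by
    unfold patRep
    rw [dif_pos hex]
    exact hex.choose_spec
  intro i j
  exact (iff_of_eq (congrFun (congrFun hp i) j)).symm

lemma exists_ulim [Finite α] {β : Type*} (v : Ultrafilter β) (f : β → α) :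
    ∃ a, ∀ᶠ w in v, f w = a := by
  obtain ⟨a, ha⟩ := (v.map f).eq_pure_of_finite
  refine ⟨a, ?_⟩
  have h : ({a} : Set α) ∈ v.map f := by rw [ha]; exact Ultrafilter.mem_pure.mpr rfl
  exact h

/-- The limit along `v` of a function with finitely many values. -/
noncomputable def ulim [Finite α] {β : Type*} (v : Ultrafilter β) (f : β → α) : α :=
  (exists_ulim v f).choose

lemma ulim_spec [Finite α] {β : Type*} (v : Ultrafilter β) (f : β → α) :
    ∀ᶠ w in v, f w = ulim v f := (exists_ulim v f).choose_spec

/-- What happens to an `n`-tuple of branches at the levels where some of its members split: for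
each such level, in increasing order, the order pattern of the nodes before the splitting, and the
bits taken. -/
abbrev SplitType (n : ℕ) : Type := List ((Fin n → Fin n → Prop) × (Fin n → Bool))

/-- The colour that an `n`-tuple of strings is expected to receive after `v`-generic words have
been appended at all the splittings prescribed by the given type. -/
noncomputable def expColor [Finite α] (v : Ultrafilter VarWord)
    (d : (Fin n → List Bool) → α) : SplitType n → (Fin n → List Bool) → α
  | [], s => d s
  | (R, b) :: τ, s => ulim v fun w => expColor v d τ (cat s (ev (patRep R) b w))

section

variable [Finite α] {v : Ultrafilter VarWord} (d : (Fin n → List Bool) → α)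

/-- At a splitting level, a generic word realizes the expectation. -/
lemma expColor_split (hv : NodeFree n v) (h : Fin n → ℕ) (b : Fin n → Bool) (τ : SplitType n)
    (s : Fin n → List Bool) :
    ∀ᶠ w in v, expColor v d τ (cat s (ev h b w)) = expColor v d ((pat h, b) :: τ) s :=
  (hv h _ b (samePattern_patRep h)
    {t | expColor v d τ (cat s t) = expColor v d ((pat h, b) :: τ) s}).mpr (ulim_spec v _)

/-- At a level without splitting, a generic word does not change the expectation. -/
lemma expColor_stay (hv : NodeFree n v) (hb : BitFree n v) (ha : AbsorbsZero n v)
    (h : Fin n → ℕ) (b b' : Fin n → Bool) (hbh : Respects b h) (τ : SplitType n)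
    (s : Fin n → List Bool) :
    ∀ᶠ w in v, expColor v d ((pat h, b') :: τ) (cat s (ev h b w)) =
      expColor v d ((pat h, b') :: τ) s := by
  set a := expColor v d ((pat h, b') :: τ) s
  refine (hb h b (fun _ => false) hbh (fun _ _ _ => rfl)
    {t | expColor v d ((pat h, b') :: τ) (cat s t) = a}).mpr ?_
  have h1 := (ha h b' {t | expColor v d τ (cat s t) = a}).mp (expColor_split d hv h b' τ s)
  refine h1.mono fun z hz => ?_
  obtain ⟨u, hu1, hu2⟩ :=
    (hz.and (expColor_split d hv h b' τ (cat s (ev h (fun _ => false) z)))).exists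
  rw [mem_ofPred_eq, ← cat_assoc] at hu1
  exact hu2.symm.trans hu1

/-- Given the strings `L q` already attached to the nodes `q` of level `N`, some word contains the
variable and behaves generically for all tuples of these nodes. -/
lemma exists_genericWord (hv0 : HasVar v) (hv : NodeFree n v) (hb : BitFree n v)
    (ha : AbsorbsZero n v) (N : ℕ) (L : ℕ → List Bool) :
    ∃ w : VarWord, none ∈ FreeMonoid.toList w ∧
      ∀ (h : Fin n → ℕ), (∀ i, h i < 2 ^ (N + 1)) → ∀ (b : Fin n → Bool) (τ : SplitType n),
        τ.length ≤ n * n →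
          expColor v d τ (cat (fun i => L (h i)) (ev h b w)) =
            expColor v d ((pat h, b) :: τ) (fun i => L (h i)) ∧
          (Respects b h → ∀ b',
            expColor v d ((pat h, b') :: τ) (cat (fun i => L (h i)) (ev h b w)) =
              expColor v d ((pat h, b') :: τ) fun i => L (h i)) := by
  have hfin : {h : Fin n → ℕ | ∀ i, h i < 2 ^ (N + 1)}.Finite := by
    have := Set.Finite.pi' (fun _ : Fin n => Set.finite_Iio (2 ^ (N + 1)))
    exact this
  have hfin' : {τ : SplitType n | τ.length ≤ n * n}.Finite := List.finite_length_le _ _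
  refine Eventually.exists (f := (v : Filter VarWord)) (hv0.and ?_)
  refine (eventually_all_finite hfin).mpr fun h _ => eventually_all.mpr fun b =>
    (eventually_all_finite hfin').mpr fun τ _ => (expColor_split d hv h b τ _).and ?_
  by_cases hbh : Respects b h
  · exact (eventually_all.mpr fun b' => expColor_stay d hv hb ha h b b' hbh τ _).mono
      fun w hw _ => hw
  · exact Eventually.of_forall fun w hr => absurd hr hbh

end

/-- The string read from `w` at the node `q` with variable `β`. -/
def readWord (w : VarWord) (q : ℕ) (β : Bool) : List Bool :=
  (FreeMonoid.toList w).map fun o => o.elim β fun a => a q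

/-- The strings attached to the nodes of level `N`: the word `W N L` chosen at level `N` is
appended at each node `q`, with the variable replaced by `0` and `1` for the two children. -/
def strings (W : ℕ → (ℕ → List Bool) → VarWord) : ℕ → ℕ → List Bool
  | 0, _ => []
  | N + 1, q => strings W N (q / 2) ++
      readWord (W N (strings W N)) (q / 2) (decide (q % 2 = 1))

/-- A finite string, extended by zeros. -/
def pad (s : List Bool) : Cantor := fun j => s.getD j false

lemma pad_append_left (s t : List Bool) : Agree s.length (pad (s ++ t)) (pad s) := fun j hj => by
  simp [pad, List.getElem?_append_left hj]

lemma splitAt_append (s t t' : List Bool) (j : ℕ) (h : SplitAt j (pad t) (pad t')) :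
    SplitAt (s.length + j) (pad (s ++ t)) (pad (s ++ t')) := by
  have key : ∀ u : List Bool, ∀ i, pad (s ++ u) (s.length + i) = pad u i := fun u i => by
    simp [pad, List.getElem?_append_right (Nat.le_add_right s.length i)]
  refine ⟨fun i hi => ?_, by rw [key]; exact h.2.1, by rw [key]; exact h.2.2⟩
  rcases lt_or_ge i s.length with hlt | hge
  · rw [pad_append_left s t i hlt, pad_append_left s t' i hlt]
  · obtain ⟨r, rfl⟩ := Nat.exists_eq_add_of_le hge
    rw [key, key]
    exact h.1 r (by omega)

lemma exists_splitAt_map (q : ℕ) (l : List (Option (ℕ → Bool))) (hl : none ∈ l) :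
    ∃ j < l.length, SplitAt j (pad (l.map fun o => o.elim false fun a => a q))
      (pad (l.map fun o => o.elim true fun a => a q)) := by
  induction l with
  | nil => simp at hl
  | cons o l ih =>
    cases o with
    | none =>
      exact ⟨0, by simp, fun i hi => absurd hi (Nat.not_lt_zero i), by simp [pad], by simp [pad]⟩
    | some a =>
      obtain ⟨j, hj, hs⟩ := ih (by simpa using hl)
      refine ⟨1 + j, by simp; omega, ?_⟩
      exact splitAt_append [a q] _ _ j hs

section

variable {W : ℕ → (ℕ → List Bool) → VarWord}

lemma length_strings (N : ℕ) (q q' : ℕ) :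
    (strings W N q).length = (strings W N q').length := by
  induction N generalizing q q' with
  | zero => rfl
  | succ N ih => simp [strings, readWord, ih (q / 2) (q' / 2)]

lemma isScheme_strings (hW : ∀ N L, none ∈ FreeMonoid.toList (W N L)) :
    IsScheme (fun N => (strings W N 0).length) (fun N q => pad (strings W N q)) := by
  have hlen : ∀ N, (strings W (N + 1) 0).length =
      (strings W N 0).length + (FreeMonoid.toList (W N (strings W N))).length := fun N => by
    simp [strings, readWord]
  have hpos : ∀ N, 0 < (FreeMonoid.toList (W N (strings W N))).length := fun N =>
    List.length_pos_of_mem (hW N _)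
  refine ⟨fun N => ?_, fun N => ?_, fun N q => ?_, fun N q _ _ => ?_⟩
  · induction N with
    | zero => exact Nat.zero_le _
    | succ N ih => have := hlen N; have := hpos N; omega
  · have := hlen N; omega
  · simp only [length_strings N 0 (q / 2)]
    exact pad_append_left _ _
  · obtain ⟨j, hj, hs⟩ := exists_splitAt_map q _ (hW N (strings W N))
    refine ⟨(strings W N q).length + j, ?_, ?_⟩
    · have h1 := hlen N
      have h2 := length_strings (W := W) N 0 q
      omega
    · have h1 : (2 * q + 1) / 2 = q := by omega
      have h2 : (2 * q + 1) % 2 = 1 := by omega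
      simp only [strings, h1, h2, Nat.mul_div_cancel_left q two_pos, Nat.mul_mod_right]
      exact splitAt_append _ _ _ _ hs

lemma strings_code_succ (Y : Fin n → Cantor) (N : ℕ) :
    (fun i => strings W (N + 1) (code (Y i) (N + 1))) =
      cat (fun i => strings W N (code (Y i) N))
        (ev (fun i => code (Y i) N) (fun i => Y i N) (W N (strings W N))) := by
  funext i
  have h : decide (code (Y i) (N + 1) % 2 = 1) = Y i N := by
    have aux : ∀ (a : ℕ) (β : Bool), decide ((2 * a + β.toNat) % 2 = 1) = β := by
      intro a β
      cases β <;> simp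
    exact aux _ _
  simp only [strings, code_div, h]
  rfl

end

/-- A lexicographically increasing tuple. -/
def Inc (Y : Fin n → Cantor) : Prop := ∀ i j, i < j → ∃ p, SplitAt p (Y i) (Y j)

lemma Inc.splitAt (Y : Fin n → Cantor) (hY : Inc Y) {i j : Fin n} (hij : i < j) :
    SplitAt (splitLevel (Y i) (Y j)) (Y i) (Y j) := by
  obtain ⟨p, hp⟩ := hY i j hij
  rwa [hp.splitLevel_eq]

lemma not_splitAt_swap {p p' : ℕ} {x y : Cantor} (h : SplitAt p x y) : ¬ SplitAt p' y x :=
  fun h' => by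
    have hpp : p = p' := by
      rcases lt_trichotomy p p' with hlt | heq | hgt
      · have := h'.1 p hlt
        rw [h.2.1, h.2.2] at this
        simp at this
      · exact heq
      · have := h.1 p' hgt
        rw [h'.2.1, h'.2.2] at this
        simp at this
    subst hpp
    have := h.2.1.symm.trans h'.2.2
    simp at this

lemma Inc.lt {Y : Fin n → Cantor} (hY : Inc Y) {i j : Fin n} {p : ℕ}
    (h : SplitAt p (Y i) (Y j)) : i < j := by
  rcases lt_trichotomy i j with hlt | rfl | hgt
  · exact hlt
  · exact absurd rfl h.ne
  · obtain ⟨p', hp'⟩ := hY j i hgt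
    exact absurd h (not_splitAt_swap hp')

lemma Inc.splitAt_iff {Y : Fin n → Cantor} (hY : Inc Y) {i j : Fin n} {p : ℕ} :
    SplitAt p (Y i) (Y j) ↔ i < j ∧ splitLevel (Y i) (Y j) = p :=
  ⟨fun h => ⟨hY.lt h, h.splitLevel_eq⟩, fun h => h.2 ▸ Inc.splitAt Y hY h.1⟩

/-- Some members of `Y` split at level `N`. -/
def IsSplitLevel (Y : Fin n → Cantor) (N : ℕ) : Prop := ∃ i j, SplitAt N (Y i) (Y j)

open Classical in
/-- The split type of `Y`, restricted to the levels in `[N, N + f)`. -/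
noncomputable def splitType (Y : Fin n → Cantor) : ℕ → ℕ → SplitType n
  | 0, _ => []
  | f + 1, N => if IsSplitLevel Y N then
      (pat (fun i => code (Y i) N), fun i => Y i N) :: splitType Y f (N + 1)
    else splitType Y f (N + 1)

lemma length_splitType (Y : Fin n → Cantor) (f N : ℕ) : (splitType Y f N).length ≤ n * n := by
  classical
  set S := (Finset.univ : Finset (Fin n × Fin n)).image fun p => splitLevel (Y p.1) (Y p.2)
  have hS : S.card ≤ n * n := by
    refine Finset.card_image_le.trans ?_
    simp
  refine le_trans ?_ ((Finset.card_filter_le S (N ≤ ·)).trans hS)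
  induction f generalizing N with
  | zero => simp [splitType]
  | succ f ih =>
    unfold splitType
    split_ifs with h
    · obtain ⟨i, j, hij⟩ := h
      have hmem : N ∈ S.filter (N ≤ ·) := by
        refine Finset.mem_filter.mpr ⟨Finset.mem_image.mpr ⟨(i, j), Finset.mem_univ _, ?_⟩, le_rfl⟩
        exact hij.splitLevel_eq
      refine Nat.succ_le_of_lt ((ih (N + 1)).trans_lt (Finset.card_lt_card ?_))
      refine Finset.ssubset_iff_subset_ne.mpr ⟨fun x hx => ?_, fun heq => ?_⟩
      · rw [Finset.mem_filter] at hx ⊢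
        exact ⟨hx.1, by omega⟩
      · rw [← heq, Finset.mem_filter] at hmem
        omega
    · refine (ih (N + 1)).trans (Finset.card_le_card fun x hx => ?_)
      rw [Finset.mem_filter] at hx ⊢
      exact ⟨hx.1, by omega⟩

lemma pat_code_succ {Y : Fin n → Cantor} {N : ℕ} (h : ¬ IsSplitLevel Y N) :
    pat (fun i => code (Y i) (N + 1)) = pat fun i => code (Y i) N := by
  funext i j
  refine propext ?_
  simp only [pat, code_lt_iff]
  constructor
  · rintro ⟨p, hp, hs⟩
    rcases Nat.lt_succ_iff_lt_or_eq.mp hp with hp | rfl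
    · exact ⟨p, hp, hs⟩
    · exact absurd ⟨i, j, hs⟩ h
  · rintro ⟨p, hp, hs⟩
    exact ⟨p, by omega, hs⟩

lemma splitType_head {Y : Fin n → Cantor} {f N : ℕ} {R : Fin n → Fin n → Prop} {b : Fin n → Bool}
    {τ : SplitType n} (h : splitType Y f N = (R, b) :: τ) : R = pat fun i => code (Y i) N := by
  induction f generalizing N with
  | zero => simp [splitType] at h
  | succ f ih =>
    unfold splitType at h
    split_ifs at h with hN
    · simp only [List.cons.injEq, Prod.mk.injEq] at h
      exact h.1.1.symm
    · rw [ih h, pat_code_succ hN]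

lemma respects_of_not_isSplitLevel {Y : Fin n → Cantor} {N : ℕ} (h : ¬ IsSplitLevel Y N) :
    Respects (fun i => Y i N) fun i => code (Y i) N := by
  intro i j hij
  have hag := agree_of_code hij
  by_contra hne
  simp only at hne
  refine h ?_
  cases hi : Y i N <;> cases hj : Y j N
  · simp [hi, hj] at hne
  · exact ⟨i, j, hag, hi, hj⟩
  · exact ⟨j, i, hag.symm, hj, hi⟩
  · simp [hi, hj] at hne

/-- Two increasing tuples whose splitting levels are ordered in the same way have the same split
type, provided that all members with bit `1` at a common level agree up to there. -/
lemma splitType_eq {Y Y' : Fin n → Cantor} (hY : Inc Y) (hY' : Inc Y')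
    (hsk : ∀ N i j, Y i N = true → Y j N = true → Agree N (Y i) (Y j))
    (hsk' : ∀ N i j, Y' i N = true → Y' j N = true → Agree N (Y' i) (Y' j))
    (hord : ∀ i j a b : Fin n, i < j → a < b → (splitLevel (Y i) (Y j) < splitLevel (Y a) (Y b) ↔
      splitLevel (Y' i) (Y' j) < splitLevel (Y' a) (Y' b))) :
    ∀ M f f' N N', f + f' ≤ M →
      (∀ i j, i < j → (splitLevel (Y i) (Y j) < N ↔ splitLevel (Y' i) (Y' j) < N')) →
      (∀ i j, i < j → splitLevel (Y i) (Y j) < N + f) →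
      (∀ i j, i < j → splitLevel (Y' i) (Y' j) < N' + f') →
      splitType Y f N = splitType Y' f' N' := by
  have nonsplit : ∀ {Z : Fin n → Cantor} (_ : Inc Z) {N : ℕ}, ¬ IsSplitLevel Z N →
      ∀ i j, i < j → (splitLevel (Z i) (Z j) < N + 1 ↔ splitLevel (Z i) (Z j) < N) := by
    intro Z hZ N hN i j hij
    have : splitLevel (Z i) (Z j) ≠ N := fun h => hN ⟨i, j, h ▸ Inc.splitAt Z hZ hij⟩
    omega
  -- If all splittings occur below `N`, the rest of the type is empty.
  have nil : ∀ {Z : Fin n → Cantor} (_ : Inc Z) (f N : ℕ),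
      (∀ i j, i < j → splitLevel (Z i) (Z j) < N) → splitType Z f N = [] := by
    intro Z hZ f
    induction f with
    | zero => intro N _; rfl
    | succ f ih =>
      intro N hN
      have : ¬ IsSplitLevel Z N := fun ⟨i, j, h⟩ => by
        have h1 := hN i j (hZ.lt h)
        rw [h.splitLevel_eq] at h1
        exact lt_irrefl _ h1
      unfold splitType
      rw [if_neg this]
      exact ih (N + 1) fun i j hij => (hN i j hij).trans (Nat.lt_succ_self N)
  have bits : ∀ {Z : Fin n → Cantor} (_ : Inc Z)
      (_ : ∀ N i j, Z i N = true → Z j N = true → Agree N (Z i) (Z j)) {N : ℕ},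
      IsSplitLevel Z N → ∀ j, (Z j N = true ↔ ∃ i, i < j ∧ splitLevel (Z i) (Z j) = N) := by
    rintro Z hZ hs N ⟨a, b, hab⟩ j
    refine ⟨fun hj => ⟨a, hZ.splitAt_iff.mp ⟨hab.1.trans (hs N b j hab.2.2 hj), hab.2.1, hj⟩⟩, ?_⟩
    rintro ⟨i, hi⟩
    exact (hZ.splitAt_iff.mpr hi).2.2
  intro M
  induction M with
  | zero =>
    intro f f' N N' hM _ _ _
    obtain rfl : f = 0 := by omega
    obtain rfl : f' = 0 := by omega
    rfl
  | succ M ih =>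
    intro f f' N N' hM hsync hf hf'
    rcases Nat.eq_zero_or_pos f with rfl | hfp
    · rw [nil hY' f' N' fun i j hij => (hsync i j hij).mp (hf i j hij)]
      rfl
    rcases Nat.eq_zero_or_pos f' with rfl | hfp'
    · rw [nil hY f N fun i j hij => (hsync i j hij).mpr (hf' i j hij)]
      rfl
    obtain ⟨f, rfl⟩ := Nat.exists_eq_succ_of_ne_zero hfp.ne'
    obtain ⟨f', rfl⟩ := Nat.exists_eq_succ_of_ne_zero hfp'.ne'
    by_cases hN : IsSplitLevel Y N
    · by_cases hN' : IsSplitLevel Y' N'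
      · obtain ⟨a, b, hab⟩ := hN
        obtain ⟨a', b', hab'⟩ := hN'
        obtain ⟨l1, e1⟩ := hY.splitAt_iff.mp hab
        obtain ⟨l2, e2⟩ := hY'.splitAt_iff.mp hab'
        have s1 := hsync a b l1
        have s2 := hsync a' b' l2
        have o12 := hord a' b' a b l2 l1
        have hsync' : ∀ i j, i < j →
            (splitLevel (Y i) (Y j) < N + 1 ↔ splitLevel (Y' i) (Y' j) < N' + 1) := by
          intro i j hij
          have o1 := hord a b i j l1 hij
          omega
        have hlev : ∀ i j, i < j →
            (splitLevel (Y i) (Y j) = N ↔ splitLevel (Y' i) (Y' j) = N') := by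
          intro i j hij
          have h1 := hsync i j hij
          have h2 := hsync' i j hij
          omega
        have hpat : pat (fun i => code (Y i) N) = pat fun i => code (Y' i) N' := by
          funext i j
          refine propext ?_
          simp only [pat, code_lt_iff, hY.splitAt_iff, hY'.splitAt_iff]
          constructor
          · rintro ⟨p, hp, hij, rfl⟩
            exact ⟨_, (hsync i j hij).mp hp, hij, rfl⟩
          · rintro ⟨p, hp, hij, rfl⟩
            exact ⟨_, (hsync i j hij).mpr hp, hij, rfl⟩
        have hbit : (fun i => Y i N) = fun i => Y' i N' := by
          funext j
          rw [Bool.eq_iff_iff, bits hY hsk ⟨a, b, hab⟩, bits hY' hsk' ⟨a', b', hab'⟩]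
          exact exists_congr fun i => and_congr_right fun hij => hlev i j hij
        unfold splitType
        rw [if_pos ⟨a, b, hab⟩, if_pos ⟨a', b', hab'⟩, hpat, hbit,
          ih f f' (N + 1) (N' + 1) (by omega) hsync' (fun i j hij => ?_) fun i j hij => ?_]
        · have := hf i j hij; omega
        · have := hf' i j hij; omega
      · rw [ih (f + 1) f' N (N' + 1) (by omega) (fun i j hij => ?_) hf fun i j hij => ?_]
        · conv_rhs => unfold splitType
          rw [if_neg hN']
        · rw [nonsplit hY' hN' i j hij]; exact hsync i j hij
        · have := hf' i j hij; omega
    · rw [← ih f (f' + 1) (N + 1) N' (by omega) (fun i j hij => ?_) (fun i j hij => ?_) hf']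
      · conv_lhs => unfold splitType
        rw [if_neg hN]
      · rw [nonsplit hY hN i j hij]; exact hsync i j hij
      · have := hf i j hij; omega

lemma lt_of_splitType_eq_nil {Y : Fin n → Cantor} {f N p : ℕ} (h : splitType Y f N = [])
    (hp : IsSplitLevel Y p) (hpf : p < N + f) : p < N := by
  induction f generalizing N with
  | zero => exact hpf
  | succ f ih =>
    unfold splitType at h
    split_ifs at h with hN
    have h1 := ih h (by omega)
    have h2 : p ≠ N := fun e => hN (e ▸ hp)
    omega

/-- For a suitable embedding `Ψ` of `2^ω` into itself, the colour under a local colouring of the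
image of a skew tuple depends only on how the splitting levels of the tuple are ordered. -/
lemma exists_canonical [Finite α] (c₀ : (Fin n → Cantor) → α) (hc : LocalColoring c₀) :
    ∃ Ψ : Cantor → Cantor, Continuous Ψ ∧ LexMono Ψ ∧ GapMono Ψ ∧
      ∀ Y Y' : Fin n → Cantor, Inc Y → Inc Y' →
        (∀ N i j, Y i N = true → Y j N = true → Agree N (Y i) (Y j)) →
        (∀ N i j, Y' i N = true → Y' j N = true → Agree N (Y' i) (Y' j)) →
        (∀ i j a b : Fin n, i < j → a < b →
          (splitLevel (Y i) (Y j) < splitLevel (Y a) (Y b) ↔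
            splitLevel (Y' i) (Y' j) < splitLevel (Y' a) (Y' b))) →
        c₀ (fun i => Ψ (Y i)) = c₀ fun i => Ψ (Y' i) := by
  obtain ⟨v, hv0, hb, hv, ha⟩ := exists_ultrafilter n
  set d : (Fin n → List Bool) → α := fun s => c₀ fun i => pad (s i) with hd
  choose W hW1 hW2 using fun N L => exists_genericWord d hv0 hv hb ha N L
  have hsch := isScheme_strings hW1
  have hmono := monotone_nat_of_le_succ hsch.mono
  set Ψ := schemeMap fun N q => pad (strings W N q)
  -- Once all splittings have occurred, the colour is decided by locality.
  have hbase : ∀ (Y : Fin n → Cantor) (N : ℕ), Inc Y →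
      (∀ i j, i < j → splitLevel (Y i) (Y j) < N) →
      d (fun i => strings W N (code (Y i) N)) = c₀ fun i => Ψ (Y i) := by
    intro Y N hY hN
    refine (hc (strings W N 0).length _ _ (fun i j hij => ?_) fun i => hsch.agree_map (Y i) N).symm
    obtain ⟨q, -, hq, hs⟩ := hsch.splitAt_map (Inc.splitAt Y hY hij)
    exact ⟨q, hq.trans_le (hmono (hN i j hij)), hs⟩
  -- The expected colour does not change along the construction.
  have hconst : ∀ (Y : Fin n → Cantor), Inc Y → ∀ (f N : ℕ),
      (∀ i j, i < j → splitLevel (Y i) (Y j) < N + f) →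
      expColor v d (splitType Y f N) (fun i => strings W N (code (Y i) N)) =
        c₀ fun i => Ψ (Y i) := by
    intro Y hY f
    induction f with
    | zero => exact fun N hN => hbase Y N hY hN
    | succ f ih =>
      intro N hN
      have ih' := ih (N + 1) fun i j hij => by have := hN i j hij; omega
      rw [strings_code_succ] at ih'
      obtain ⟨h1, -⟩ := hW2 N (strings W N) (fun i => code (Y i) N)
        (fun i => (code_bounds (Y i) N).2) (fun i => Y i N) _ (length_splitType Y f (N + 1))
      by_cases hs : IsSplitLevel Y N
      · unfold splitType
        rw [if_pos hs, ← h1]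
        exact ih'
      · have hst : splitType Y (f + 1) N = splitType Y f (N + 1) := by
          conv_lhs => unfold splitType
          rw [if_neg hs]
        rw [hst]
        rcases hτ : splitType Y f (N + 1) with _ | ⟨⟨R, b'⟩, τ⟩
        · exact hbase Y N hY fun i j hij => lt_of_splitType_eq_nil (hst.trans hτ)
            ⟨i, j, Inc.splitAt Y hY hij⟩ (hN i j hij)
        · obtain rfl := splitType_head (hst.trans hτ)
          have hlen := length_splitType Y f (N + 1)
          rw [hτ, List.length_cons] at hlen
          rw [hτ] at ih'
          rw [← ih']
          exact ((hW2 N (strings W N) (fun i => code (Y i) N)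
            (fun i => (code_bounds (Y i) N).2) (fun i => Y i N) τ (by omega)).2
            (respects_of_not_isSplitLevel hs) b').symm
  refine ⟨Ψ, continuous_schemeMap _, hsch.lexMono, hsch.gapMono, ?_⟩
  intro Y Y' hY hY' hsk hsk' hord
  have hbd : ∀ Z : Fin n → Cantor, ∃ K, ∀ i j, splitLevel (Z i) (Z j) < K := fun Z =>
    ⟨(Finset.univ.sup fun p : Fin n × Fin n => splitLevel (Z p.1) (Z p.2)) + 1, fun i j =>
      Nat.lt_succ_of_le (Finset.le_sup
        (f := fun p : Fin n × Fin n => splitLevel (Z p.1) (Z p.2)) (Finset.mem_univ (i, j)))⟩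
  obtain ⟨K, hK⟩ := hbd Y
  obtain ⟨K', hK'⟩ := hbd Y'
  have e1 := hconst Y hY K 0 fun i j _ => by rw [Nat.zero_add]; exact hK i j
  have e2 := hconst Y' hY' K' 0 fun i j _ => by rw [Nat.zero_add]; exact hK' i j
  rw [← e1, ← e2, splitType_eq hY hY' hsk hsk' hord (K + K') K K' 0 0 le_rfl
    (fun i j _ => by simp) (fun i j _ => by rw [Nat.zero_add]; exact hK i j)
    fun i j _ => by rw [Nat.zero_add]; exact hK' i j]
  rfl

end Canonical

/-! ### Skew embeddings and the theorem -/

section SkewEmbedding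

open Filter Topology

lemma code_strictMono (z : Cantor) : StrictMono (code z) := by
  refine strictMono_nat_of_lt_succ fun k => ?_
  have := (code_bounds z k).1
  have := Nat.two_pow_pos k
  simp only [code]
  omega

open Classical in
/-- The embedding of `2^ω` onto a skew set: the bit `z k` is placed at a coordinate reserved for
the node `z ↾ k`, and all other coordinates are `0`. -/
noncomputable def skewMap (z : Cantor) : Cantor :=
  fun N => decide (∃ k, code z k = N + 1 ∧ z k = true)

lemma skewMap_eq_true {z : Cantor} {N : ℕ} :
    skewMap z N = true ↔ ∃ k, code z k = N + 1 ∧ z k = true := by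
  simp [skewMap]

lemma skewMap_congr {k j : ℕ} {y z : Cantor} (h : Agree k y z) (hj : j + 1 < code y k) :
    skewMap y j = skewMap z j := by
  have key : ∀ {y z : Cantor}, Agree k y z → j + 1 < code y k → skewMap y j = true →
      skewMap z j = true := by
    intro y z h hj hy
    obtain ⟨i, hi, hb⟩ := skewMap_eq_true.mp hy
    have hik : i < k := (code_strictMono y).lt_iff_lt.mp (hi ▸ hj)
    exact skewMap_eq_true.mpr ⟨i, (code_congr (h.mono hik.le)) ▸ hi, (h i hik) ▸ hb⟩
  exact Bool.eq_iff_iff.mpr ⟨key h hj, key h.symm (code_congr h ▸ hj)⟩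

lemma continuous_skewMap : Continuous skewMap :=
  continuous_of_local (fun j => j + 1) fun j y _ h => skewMap_congr h
    (Nat.lt_two_pow_self.trans_le (code_bounds y (j + 1)).1)

lemma splitAt_skewMap {p : ℕ} {y z : Cantor} (h : SplitAt p y z) :
    SplitAt (code y p - 1) (skewMap y) (skewMap z) := by
  have hpos : code y p - 1 + 1 = code y p := by
    have := (code_bounds y p).1
    have := Nat.two_pow_pos p
    omega
  refine ⟨fun j hj => skewMap_congr h.1 (by omega), ?_, ?_⟩
  · rw [← Bool.not_eq_true, skewMap_eq_true]
    rintro ⟨k, hk, hb⟩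
    rw [hpos] at hk
    rw [(code_strictMono y).injective hk, h.2.1] at hb
    simp at hb
  · exact skewMap_eq_true.mpr ⟨p, by rw [hpos, code_congr h.1], h.2.2⟩

lemma lexMono_skewMap : LexMono skewMap := fun _ _ _ h => ⟨_, splitAt_skewMap h⟩

/-- Two branches of the image having the bit `1` at a common level agree up to that level. -/
lemma agree_skewMap {N : ℕ} {y z : Cantor} (hy : skewMap y N = true) (hz : skewMap z N = true) :
    Agree N (skewMap y) (skewMap z) := by
  obtain ⟨k, hk, -⟩ := skewMap_eq_true.mp hy
  obtain ⟨k', hk', -⟩ := skewMap_eq_true.mp hz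
  have hkk : k = k' := by
    obtain ⟨h1, h2⟩ := code_bounds y k
    obtain ⟨h3, h4⟩ := code_bounds z k'
    have e1 := (Nat.pow_lt_pow_iff_right one_lt_two).mp (h1.trans_lt (by omega : _ < 2 ^ (k' + 1)))
    have e2 := (Nat.pow_lt_pow_iff_right one_lt_two).mp (h3.trans_lt (by omega : _ < 2 ^ (k + 1)))
    omega
  subst hkk
  exact fun j hj => skewMap_congr (agree_of_code (hk.trans hk'.symm)) (by omega)

lemma LexMono.comp {F G : Cantor → Cantor} (hF : LexMono F) (hG : LexMono G) :
    LexMono (F ∘ G) := fun p y z h => by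
  obtain ⟨j, hj⟩ := hG p y z h
  exact hF j _ _ hj

lemma GapMono.comp {F G : Cantor → Cantor} (hF : GapMono F) (hG : GapMono G) :
    GapMono (F ∘ G) := fun p y z p' y' z' h h' hlt => by
  obtain ⟨j, j', hj, h1, h2⟩ := hG p y z p' y' z' h h' hlt
  exact hF j _ _ j' _ _ h1 h2 hj

lemma LexMono.injective {F : Cantor → Cantor} (hF : LexMono F) : Function.Injective F := by
  intro y z h
  by_contra hne
  obtain ⟨k, hk | hk⟩ := exists_splitAt_of_ne hne
  · obtain ⟨j, hj⟩ := hF k _ _ hk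
    exact hj.ne h
  · obtain ⟨j, hj⟩ := hF k _ _ hk
    exact hj.ne h.symm

lemma perfectSet_range {F : Cantor → Cantor} (hF : Continuous F) (hinj : Function.Injective F) :
    PerfectSet (range F) := by
  refine ⟨⟨(isCompact_range hF).isClosed, ?_⟩, range_nonempty F⟩
  rintro _ ⟨y, rfl⟩
  rw [accPt_iff_nhds]
  intro U hU
  -- Flipping a single, arbitrarily late bit of `y` gives points converging to `y`.
  have ht : Tendsto (fun k => Function.update y k (!y k)) atTop (𝓝 y) := by
    rw [tendsto_pi_nhds]
    intro j
    refine (tendsto_const_nhds (x := y j)).congr' ?_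
    filter_upwards [eventually_gt_atTop j] with k hk
    rw [Function.update_of_ne hk.ne]
  obtain ⟨k, hk⟩ := ((hF.tendsto y).comp ht |>.eventually hU).exists
  refine ⟨_, ⟨hk, mem_range_self _⟩, fun h => ?_⟩
  have := congrFun (hinj h) k
  simp at this

end SkewEmbedding

section Gaps

variable {n : ℕ}

lemma cdist_gt_iff {x y x' y' : Cantor} :
    cdist x y > cdist x' y' ↔ splitLevel x y < splitLevel x' y' := by
  unfold cdist
  rw [gt_iff_lt, one_div_lt_one_div (by positivity) (by positivity)]
  simp

lemma Inc.code_mono {Y : Fin n → Cantor} (hY : Inc Y) (N : ℕ) {i j : Fin n} (h : i ≤ j) :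
    code (Y i) N ≤ code (Y j) N := by
  by_contra hlt
  obtain ⟨p, -, hp⟩ := code_lt_iff.mp (not_le.mp hlt)
  exact absurd (hY.lt hp) (not_lt.mpr h)

lemma gapIdx_lt (k : Fin (n - 1)) : (gapIdx k : Fin n) < gapIdx' k :=
  Nat.lt_succ_self k.1

/-- In a skew tuple, different gaps have different lengths. -/
lemma gapLen_ne {Y : Fin n → Cantor} (hY : Inc Y)
    (hsk : ∀ N i j, Y i N = true → Y j N = true → Agree N (Y i) (Y j))
    {k k' : Fin (n - 1)} (h : k ≠ k') : gapLen Y k ≠ gapLen Y k' := by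
  have key : ∀ {k k' : Fin (n - 1)}, k < k' → gapLen Y k ≠ gapLen Y k' := by
    intro k k' hlt heq
    have h1 := Inc.splitAt Y hY (gapIdx_lt k)
    have h2 := Inc.splitAt Y hY (gapIdx_lt k')
    change SplitAt (gapLen Y k) _ _ at h1
    change SplitAt (gapLen Y k') _ _ at h2
    rw [← heq] at h2
    have h3 : SplitAt (gapLen Y k) (Y (gapIdx k')) (Y (gapIdx' k)) :=
      ⟨h2.1.trans (hsk _ _ _ h2.2.2 h1.2.2), h2.2.1, h1.2.2⟩
    have h4 : k'.1 < k.1 + 1 := hY.lt h3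
    have h5 : k.1 < k'.1 := hlt
    omega
  rcases lt_or_gt_of_ne h with h | h
  · exact key h
  · exact (key h).symm

/-- The splitting level of two members of a tuple is the least length of the gaps between them. -/
lemma splitLevel_lt_iff {Y : Fin n → Cantor} (hY : Inc Y) {i j : Fin n} (hij : i < j) (N : ℕ) :
    splitLevel (Y i) (Y j) < N ↔
      ∃ k : Fin (n - 1), i.1 ≤ k.1 ∧ k.1 < j.1 ∧ gapLen Y k < N := by
  have hcode : ∀ {i j : Fin n}, i < j →
      (splitLevel (Y i) (Y j) < N ↔ code (Y i) N < code (Y j) N) := by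
    intro i j hij
    rw [code_lt_iff]
    exact ⟨fun h => ⟨_, h, Inc.splitAt Y hY hij⟩, fun ⟨p, hp, hs⟩ => hs.splitLevel_eq ▸ hp⟩
  rw [hcode hij]
  constructor
  · intro h
    by_contra! hno
    have hle : ∀ (m : ℕ) (hm : m < n), i.1 ≤ m → m ≤ j.1 →
        code (Y ⟨m, hm⟩) N ≤ code (Y i) N := by
      intro m hm him
      induction m, him using Nat.le_induction with
      | base => exact fun _ => le_rfl
      | succ m him ih =>
        intro hmj
        refine le_trans ?_ (ih (by omega) (by omega))
        have h1 := hno ⟨m, by omega⟩ him hmj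
        exact not_lt.mp fun hlt => not_lt.mpr h1 ((hcode (gapIdx_lt ⟨m, by omega⟩)).mpr hlt)
    exact absurd h (not_lt.mpr (hle j.1 j.2 hij.le le_rfl))
  · rintro ⟨k, h1, h2, h3⟩
    have h4 := (hcode (gapIdx_lt k)).mp h3
    have h5 : code (Y i) N ≤ code (Y (gapIdx k)) N := hY.code_mono N h1
    have h6 : code (Y (gapIdx' k)) N ≤ code (Y j) N := hY.code_mono N h2
    omega

lemma splitLevel_lt_splitLevel_iff {Y : Fin n → Cantor} (hY : Inc Y) {i j a b : Fin n}
    (hij : i < j) (hab : a < b) :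
    splitLevel (Y i) (Y j) < splitLevel (Y a) (Y b) ↔
      ∀ k' : Fin (n - 1), a.1 ≤ k'.1 → k'.1 < b.1 →
        ∃ k : Fin (n - 1), i.1 ≤ k.1 ∧ k.1 < j.1 ∧ gapLen Y k < gapLen Y k' := by
  constructor
  · intro h k' h1 h2
    rw [← splitLevel_lt_iff hY hij]
    have := (splitLevel_lt_iff hY hab (gapLen Y k' + 1)).mpr ⟨k', h1, h2, Nat.lt_succ_self _⟩
    omega
  · intro h
    obtain ⟨k', h1, h2, h3⟩ := (splitLevel_lt_iff hY hab _).mp (Nat.lt_succ_self _)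
    obtain ⟨k, h4, h5, h6⟩ := h k' h1 h2
    exact (splitLevel_lt_iff hY hij _).mpr ⟨k, h4, h5, by omega⟩

/-- A tuple from the range of `G ∘ skewMap` realizing `prec` is the image under `G` of a skew
increasing tuple whose gaps are ordered by `prec`. -/
lemma exists_skew_preimage {G : Cantor → Cantor} (hG : LexMono G) (hG' : GapMono G)
    {prec : Fin (n - 1) → Fin (n - 1) → Prop} {X : Fin n → Cantor}
    (hX : X ∈ OrdTuples n prec (range (G ∘ skewMap))) :
    ∃ Y : Fin n → Cantor, X = (fun i => G (Y i)) ∧ Inc Y ∧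
      (∀ N i j, Y i N = true → Y j N = true → Agree N (Y i) (Y j)) ∧
      ∀ k k', gapLen Y k < gapLen Y k' ↔ k ≠ k' ∧ prec k k' := by
  obtain ⟨⟨hr, hinc⟩, hprec⟩ := hX
  choose Z hZ using hr
  have hY : Inc fun i => skewMap (Z i) := by
    intro i j hij
    have hs := (hinc i j hij).splitAt
    have hne : Z i ≠ Z j := fun h => (hinc i j hij).1 (by rw [← hZ i, ← hZ j, h])
    obtain ⟨k, hk | hk⟩ := exists_splitAt_of_ne hne
    · exact lexMono_skewMap k _ _ hk
    · obtain ⟨q, hq⟩ := hG.comp lexMono_skewMap k _ _ hk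
      rw [hZ, hZ] at hq
      exact absurd hq (not_splitAt_swap hs)
  have hsk : ∀ N i j, skewMap (Z i) N = true → skewMap (Z j) N = true →
      Agree N (skewMap (Z i)) (skewMap (Z j)) := fun N i j => agree_skewMap
  refine ⟨fun i => skewMap (Z i), funext fun i => (hZ i).symm, hY, hsk, fun k k' => ?_⟩
  rcases eq_or_ne k k' with rfl | hne
  · simp
  have hlt : ∀ k k' : Fin (n - 1),
      gapLen (fun i => skewMap (Z i)) k < gapLen (fun i => skewMap (Z i)) k' →
      gapLen X k < gapLen X k' := by
    intro k k' h
    obtain ⟨q, q', hq, h1, h2⟩ := hG' _ _ _ _ _ _ (Inc.splitAt _ hY (gapIdx_lt k))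
      (Inc.splitAt _ hY (gapIdx_lt k')) h
    have e1 := h1.splitLevel_eq
    have e2 := h2.splitLevel_eq
    have hZ' : ∀ i, G (skewMap (Z i)) = X i := hZ
    rw [hZ', hZ'] at e1 e2
    unfold gapLen
    omega
  have hkk := gapLen_ne hY hsk hne
  have h1 := hlt k k'
  have h2 := hlt k' k
  have h3 := hprec k k' hne
  rw [cdist_gt_iff] at h3
  change gapLen X k < gapLen X k' ↔ _ at h3
  rw [and_iff_right hne, ← h3]
  omega

end Gaps

/-- **Blass.** For `n, l ∈ ω` and a perfect `T ⊆ 2^ω`, every Baire measurable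
coloring `c : [T]^n → l` is constant on `[P]^n_⪯` for some perfect `P ⊆ T`,
simultaneously for every total order `⪯` on `{1,…,n-1}`. -/
theorem blass_theorem (n : ℕ) (l : ℕ) (T : Set Cantor) (hT : PerfectSet T)
    (c : ↥(Tuples n T) → Fin l) (hc : BaireMeasurableFun c) :
    ∃ P : Set Cantor, P ⊆ T ∧ PerfectSet P ∧
      ∀ prec : Fin (n - 1) → Fin (n - 1) → Prop, IsLinearOrder (Fin (n - 1)) prec →
        ∃ v : Fin l, ∀ X : ↥(Tuples n T),
          (X : Fin n → Cantor) ∈ OrdTuples n prec P → c X = v := by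
  obtain ⟨Φ, c₀, hΦ, hΦl, hΦg, hΦT, hΦc, hloc⟩ := exists_local hT c hc
  obtain ⟨Ψ, hΨ, hΨl, hΨg, hcan⟩ := exists_canonical c₀ hloc
  have hGl := hΦl.comp hΨl
  refine ⟨range ((Φ ∘ Ψ) ∘ skewMap), ?_, perfectSet_range
    ((hΦ.comp hΨ).comp continuous_skewMap) (hGl.comp lexMono_skewMap).injective, ?_⟩
  · rintro _ ⟨y, rfl⟩
    exact hΦT _
  intro prec _
  -- Every value of `c` on the relevant tuples is a value of `c₀` on a skew tuple.
  have hval : ∀ X : ↥(Tuples n T),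
      (X : Fin n → Cantor) ∈ OrdTuples n prec (range ((Φ ∘ Ψ) ∘ skewMap)) →
      ∃ Y : Fin n → Cantor, c X = c₀ (fun i => Ψ (Y i)) ∧ Inc Y ∧
        (∀ N i j, Y i N = true → Y j N = true → Agree N (Y i) (Y j)) ∧
        ∀ k k', gapLen Y k < gapLen Y k' ↔ k ≠ k' ∧ prec k k' := by
    rintro ⟨X, hXT⟩ hX
    obtain ⟨Y, rfl, hY⟩ := exists_skew_preimage hGl (hΦg.comp hΨg) hX
    exact ⟨Y, hΦc (fun i => Ψ (Y i)) hXT, hY⟩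
  by_cases hex : ∃ X : ↥(Tuples n T),
      (X : Fin n → Cantor) ∈ OrdTuples n prec (range ((Φ ∘ Ψ) ∘ skewMap))
  · obtain ⟨X', hX'⟩ := hex
    obtain ⟨Y', hc', hY', hsk', hg'⟩ := hval X' hX'
    refine ⟨c X', fun X hX => ?_⟩
    obtain ⟨Y, hcY, hY, hsk, hg⟩ := hval X hX
    rw [hcY, hc']
    refine hcan Y Y' hY hY' hsk hsk' fun i j a b hij hab => ?_
    rw [splitLevel_lt_splitLevel_iff hY hij hab, splitLevel_lt_splitLevel_iff hY' hij hab]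
    simp only [hg, hg']
  · exact ⟨c₀ fun _ _ => false, fun X hX => absurd ⟨X, hX⟩ hex⟩
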